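/- For the Gaussian band ensemble, the normalized second correlation function of characteristic polynomials admits the transfer-operator representation Θ̃(z₁,z₂) = ∫_{(H₂)^N} e^{f(Q₁)} (∏_{j=1}^{N−1} 𝒦_ζ(Q_j,Q_{j+1})) e^{f(Q_N)} ∏_{j=1}^{N} dQ_j = (𝒦_ζ^{N−1} g, g), where g(Q) = e^{f(Q)} and the bilinear pairing and N-fold integral are over the space H₂ of 2×2 complex matrices. -/

import Mathlib

open MeasureTheory Matrix Filter

noncomputable section

/-- The matrix of `f ↦ -Δf`, where `Δ` is the discrete Laplacian on `{1,…,N}`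
with Neumann boundary conditions. -/
def neumannMinusLap (N : ℕ) : Matrix (Fin N) (Fin N) ℝ :=
  Matrix.of fun j k =>
    if j = k then (if (j : ℕ) = 0 ∨ (j : ℕ) = N - 1 then 1 else 2)
    else if (j : ℕ) + 1 = (k : ℕ) ∨ (k : ℕ) + 1 = (j : ℕ) then -1 else 0

/-- The band profile `J = (-W²Δ + 1)⁻¹`. -/
def Jmat (N W : ℕ) : Matrix (Fin N) (Fin N) ℝ :=
  ((W : ℝ) ^ 2 • neumannMinusLap N + 1)⁻¹

/-- The Gaussian density of the non-Hermitian band matrix ensemble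
`∏_{j,k} (π J_{jk})⁻¹ exp(-|H_{jk}|²/J_{jk})` with respect to Lebesgue measure
on the entries. -/
def bandDensity (N W : ℕ) (H : Fin N → Fin N → ℂ) : ℝ :=
  ∏ j : Fin N, ∏ k : Fin N,
    (Real.pi * Jmat N W j k)⁻¹ * Real.exp (-‖H j k‖ ^ 2 / Jmat N W j k)

/-- The second correlation function of characteristic polynomials
`Θ(z₁,z₂) = E[det(H-z₁)·conj(det(H-z₁))·det(H-z₂)·conj(det(H-z₂))]
          = E[|det(H-z₁)|²·|det(H-z₂)|²]` for the Gaussian band ensemble. -/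
def Theta (N W : ℕ) (z₁ z₂ : ℂ) : ℝ :=
  ∫ H : Fin N → Fin N → ℂ,
    ‖(Matrix.of H - z₁ • (1 : Matrix (Fin N) (Fin N) ℂ)).det‖ ^ 2 *
    ‖(Matrix.of H - z₂ • (1 : Matrix (Fin N) (Fin N) ℂ)).det‖ ^ 2 *
    bandDensity N W H
/-- `u_* = (1-|z|²)^{1/2}`. -/
def ustar (z : ℂ) : ℝ := Real.sqrt (1 - ‖z‖ ^ 2)

/-- `α = u_*(2 + u_*²W^{-2})^{1/2}`. -/
def alphaC (W : ℕ) (z : ℂ) : ℝ := ustar z * Real.sqrt (2 + ustar z ^ 2 / (W : ℝ) ^ 2)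

/-- `λ_* = 1 - W^{-1}(α - u_*²W^{-1})`. -/
def lamstar (W : ℕ) (z : ℂ) : ℝ :=
  1 - (W : ℝ)⁻¹ * (alphaC W z - ustar z ^ 2 / (W : ℝ))

/-- The normalizing constant `C_{N,W} = e^{-2Nu_*²} π^{-4N} (det J)^{-4}`. -/
def CNW (N W : ℕ) (z : ℂ) : ℝ :=
  Real.exp (-2 * (N : ℝ) * ustar z ^ 2) * (Real.pi ^ (4 * N))⁻¹ * ((Jmat N W).det ^ 4)⁻¹

/-- The normalized second correlation function
`Θ̃(z₁,z₂) = (π²W²λ_*⁻¹)^{2(N-1)} C_{N,W}⁻¹ Θ(z₁,z₂)`. -/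
def ThetaTilde (N W : ℕ) (z z₁ z₂ : ℂ) : ℝ :=
  (Real.pi ^ 2 * (W : ℝ) ^ 2 * (lamstar W z)⁻¹) ^ (2 * (N - 1)) * (CNW N W z)⁻¹ *
    Theta N W z₁ z₂
/-- The 4×4 block matrix `𝒬 = [[ẑ, iQ], [iQ*, ẑ*]]` with `ẑ = diag(z₁,z₂)` and
`ẑ* = diag(conj z₁, conj z₂)`. -/
def Qcal (z₁ z₂ : ℂ) (Q : Matrix (Fin 2) (Fin 2) ℂ) :
    Matrix (Fin 2 ⊕ Fin 2) (Fin 2 ⊕ Fin 2) ℂ :=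
  Matrix.fromBlocks (Matrix.diagonal ![z₁, z₂]) (Complex.I • Q)
    (Complex.I • Qᴴ) (Matrix.diagonal ![starRingEnd ℂ z₁, starRingEnd ℂ z₂])

/-- `f(Q) = ½(-Tr QQ* + log det 𝒬 + 2u_*²)`. -/
def fQ (z z₁ z₂ : ℂ) (Q : Matrix (Fin 2) (Fin 2) ℂ) : ℂ :=
  (1 / 2) * (-(Q * Qᴴ).trace + Complex.log (Qcal z₁ z₂ Q).det + 2 * (ustar z : ℂ) ^ 2)

/-- The kernel of the transfer operator `𝒦_ζ`:
`𝒦_ζ(Q,Q') = π⁴W⁴λ_*⁻² exp{-W² Tr (Q-Q')(Q-Q')* + f(Q) + f(Q')}`. -/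
def Kker (W : ℕ) (z z₁ z₂ : ℂ) (Q Q' : Matrix (Fin 2) (Fin 2) ℂ) : ℂ :=
  (Real.pi ^ 4 * (W : ℝ) ^ 4 * ((lamstar W z) ^ 2)⁻¹ : ℝ) *
    Complex.exp (-(W : ℂ) ^ 2 * ((Q - Q') * (Q - Q')ᴴ).trace + fQ z z₁ z₂ Q + fQ z z₁ z₂ Q')

/-- The transfer operator `𝒦_ζ` acting on functions on the space of 2×2 complex
matrices. -/
def Kop (W : ℕ) (z z₁ z₂ : ℂ) (h : (Fin 2 → Fin 2 → ℂ) → ℂ) : (Fin 2 → Fin 2 → ℂ) → ℂ :=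
  fun Q => ∫ Q' : Fin 2 → Fin 2 → ℂ, Kker W z z₁ z₂ (Matrix.of Q) (Matrix.of Q') * h Q'

/-!
The expectation of a polynomial `P` in Gaussian variables with generator `L`, the second order
operator given by the covariance, satisfies `n • E P = 2 • E (L P)` when `P` is homogeneous of
degree `n` (integration by parts and Euler's identity). Generators have constant coefficients, hence
commute, and it follows by induction on the degree that two Gaussian laws whose generators agree on
`P` give `P` the same expectation.

Take for `P` the generic determinant of size `4N`. Both `∏ₐ |det (H - zₐ)|²`, for the band matrix
`H`, and `∏ⱼ det 𝒬ⱼ`, for the Gaussian field `Q` on the chain with covariance `J`, are values of `P`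
at Gaussian matrices with the same mean. Write `a` for the indices `inl a` and `b'` for `inr b`. The
generator of the first matrix pairs the entries `((a, j), (a, k))` and `((b', k), (b', j))`, that of
the second `((a, j), (b', j))` and `((b', k), (a, k))`, with opposite sign. They agree on `P`
because a mixed second derivative of a determinant changes sign when the two columns are exchanged.
Since `J⁻¹ = 1 - W²Δ`, the density of `Q` is a product of nearest neighbour terms, which the
transfer operator assembles. The branch of the logarithm in `f` is irrelevant: every `e^{f(Qⱼ)}`
occurs squared, and `det 𝒬 ≠ 0` almost everywhere.
-/

section GaussianLaplacian

open MvPolynomial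

variable {R τ : Type*} [CommRing R]

/-- The derivative `∑ α, v α • ∂/∂X α` of polynomials in the direction of the constant vector `v`,
as a linear function of `v`. -/
def dirDeriv : (τ → R) →ₗ[R] Derivation R (MvPolynomial τ R) (MvPolynomial τ R) :=
  (mkDerivationEquiv R).toLinearMap ∘ₗ (Algebra.linearMap R (MvPolynomial τ R)).compLeft τ

@[simp]
lemma dirDeriv_X (v : τ → R) (α : τ) : dirDeriv v (X α) = C (v α) :=
  mkDerivation_X R _ α

lemma dirDeriv_single [DecidableEq τ] (α : τ) : dirDeriv (Pi.single α (1 : R)) = pderiv α :=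
  derivation_ext fun β => by
    rw [dirDeriv_X, pderiv_X]
    obtain rfl | h := eq_or_ne α β <;> simp [*, Ne.symm]

lemma dirDeriv_apply [Fintype τ] (v : τ → R) (P : MvPolynomial τ R) :
    dirDeriv v P = ∑ α, v α • pderiv α P := by
  classical
  conv_lhs => rw [pi_eq_sum_univ' v, map_sum]
  simp only [map_smul, dirDeriv_single, ← Derivation.coeFnAddMonoidHom_apply, map_sum,
    Finset.sum_apply]
  rfl

lemma dirDeriv_sum_apply {ι : Type*} (s : Finset ι) (v : ι → τ → R) (P : MvPolynomial τ R) :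
    dirDeriv (∑ i ∈ s, v i) P = ∑ i ∈ s, dirDeriv (v i) P := by
  simp only [map_sum, ← Derivation.coeFnAddMonoidHom_apply, Finset.sum_apply]

lemma eval_sum_X_mul_pderiv [Fintype τ] (x : τ → R) (P : MvPolynomial τ R) :
    eval x (∑ α, X α * pderiv α P) = eval x (dirDeriv x P) := by
  simp [dirDeriv_apply]

lemma commute_dirDeriv (v w : τ → R) :
    Commute (dirDeriv v : Module.End R (MvPolynomial τ R)) (dirDeriv w) := by
  have h : ⁅dirDeriv v, dirDeriv w⁆ = 0 := derivation_ext fun α => by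
    simp [Derivation.commutator_apply]
  rw [commute_iff_lie_eq, ← Derivation.commutator_coe_linear_map, h, Derivation.coe_zero_linearMap]

lemma homogeneousComponent_pderiv (α : τ) (n : ℕ) (P : MvPolynomial τ R) :
    homogeneousComponent n (pderiv α P) = pderiv α (homogeneousComponent (n + 1) P) := by
  classical
  ext m
  simp [coeff_homogeneousComponent, coeff_pderiv, map_add]

lemma homogeneousComponent_dirDeriv [Finite τ] (v : τ → R) (n : ℕ) (P : MvPolynomial τ R) :
    homogeneousComponent n (dirDeriv v P) = dirDeriv v (homogeneousComponent (n + 1) P) := by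
  cases nonempty_fintype τ
  simp [dirDeriv_apply, map_sum, homogeneousComponent_pderiv]

variable {κ κ' M : Type*} [Fintype κ] [Fintype κ'] [AddCommGroup M] [Module R M]

/-- The second order operator `∑ i j, K i j • ∂_{u i} ∂_{ū j}` on polynomials. It is the generator
of the complex Gaussian law of the vector `∑ i, (v i • u i + conj (v i) • ū i)` when the complex
Gaussian vector `v` has covariance `K`. -/
def gaussianLaplacian (K : Matrix κ κ R) (u ū : κ → τ → R) : Module.End R (MvPolynomial τ R) :=
  ∑ i, ∑ j, K i j • (dirDeriv (u i) * dirDeriv (ū j) : Module.End R (MvPolynomial τ R))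

lemma gaussianLaplacian_apply (K : Matrix κ κ R) (u ū : κ → τ → R) (P : MvPolynomial τ R) :
    gaussianLaplacian K u ū P = ∑ i, ∑ j, K i j • dirDeriv (u i) (dirDeriv (ū j) P) := by
  simp [gaussianLaplacian]

lemma commute_gaussianLaplacian (K : Matrix κ κ R) (u ū : κ → τ → R) (K' : Matrix κ' κ' R)
    (w w' : κ' → τ → R) : Commute (gaussianLaplacian K u ū) (gaussianLaplacian K' w w') :=
  Commute.sum_left _ _ _ fun _ _ => Commute.sum_left _ _ _ fun _ _ =>
    Commute.sum_right _ _ _ fun _ _ => Commute.sum_right _ _ _ fun _ _ =>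
      have h (v v' : τ → R) := commute_dirDeriv v v'
      ((((h _ _).mul_right (h _ _)).mul_left ((h _ _).mul_right (h _ _))).smul_left _).smul_right _

lemma homogeneousComponent_gaussianLaplacian [Finite τ] (K : Matrix κ κ R) (u ū : κ → τ → R)
    (n : ℕ) (P : MvPolynomial τ R) :
    homogeneousComponent n (gaussianLaplacian K u ū P) =
      gaussianLaplacian K u ū (homogeneousComponent (n + 2) P) := by
  simp [gaussianLaplacian_apply, homogeneousComponent_dirDeriv]

lemma isHomogeneous_dirDeriv [Finite τ] (v : τ → R) {P : MvPolynomial τ R} {n : ℕ}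
    (hP : P.IsHomogeneous n) : (dirDeriv v P).IsHomogeneous (n - 1) := by
  cases nonempty_fintype τ
  simp only [dirDeriv_apply, smul_eq_C_mul]
  exact IsHomogeneous.sum _ _ _ fun α _ => hP.pderiv.C_mul _

lemma isHomogeneous_gaussianLaplacian [Finite τ] (K : Matrix κ κ R) (u ū : κ → τ → R)
    {P : MvPolynomial τ R} {n : ℕ} (hP : P.IsHomogeneous n) :
    (gaussianLaplacian K u ū P).IsHomogeneous (n - 1 - 1) := by
  simp only [gaussianLaplacian_apply, smul_eq_C_mul]
  exact IsHomogeneous.sum _ _ _ fun i _ => IsHomogeneous.sum _ _ _ fun j _ =>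
    (isHomogeneous_dirDeriv _ <| isHomogeneous_dirDeriv _ hP).C_mul _

lemma gaussianLaplacian_eq_zero [Finite τ] (K : Matrix κ κ R) (u ū : κ → τ → R)
    {P : MvPolynomial τ R} {n : ℕ} (hn : n < 2) (hP : P.IsHomogeneous n) :
    gaussianLaplacian K u ū P = 0 := by
  have h (v : τ → R) : dirDeriv v P = C (coeff 0 (dirDeriv v P)) :=
    totalDegree_eq_zero_iff_eq_C.1 <| Nat.le_zero.1 <|
      (isHomogeneous_dirDeriv v hP).totalDegree_le.trans (by lia)
  rw [gaussianLaplacian_apply]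
  refine Finset.sum_eq_zero fun i _ => Finset.sum_eq_zero fun j _ => ?_
  rw [h, derivation_C, smul_zero]

/-- A linear functional on polynomials obeying Gaussian integration by parts with generator `L`. -/
def IsGaussianFunctional [Fintype τ] (E : MvPolynomial τ R →ₗ[R] M)
    (L : Module.End R (MvPolynomial τ R)) : Prop :=
  ∀ P, E (∑ α, X α * pderiv α P) = 2 • E (L P)

lemma IsGaussianFunctional.nsmul_apply [Fintype τ] {E : MvPolynomial τ R →ₗ[R] M}
    {L : Module.End R (MvPolynomial τ R)} (hE : IsGaussianFunctional E L) {P : MvPolynomial τ R}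
    {n : ℕ} (hP : P.IsHomogeneous n) : n • E P = 2 • E (L P) := by
  rw [← hE, hP.sum_X_mul_pderiv, map_nsmul]

variable [Fintype τ] [IsAddTorsionFree M] {E E' : MvPolynomial τ R →ₗ[R] M} {K : Matrix κ κ R}
  {u ū : κ → τ → R} {K' : Matrix κ' κ' R} {w w' : κ' → τ → R}

lemma IsGaussianFunctional.congr_of_isHomogeneous
    (hE : IsGaussianFunctional E (gaussianLaplacian K u ū))
    (hE' : IsGaussianFunctional E' (gaussianLaplacian K' w w')) (h_one : E 1 = E' 1) {n : ℕ}
    {P : MvPolynomial τ R} (hP : P.IsHomogeneous n)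
    (h : gaussianLaplacian K u ū P = gaussianLaplacian K' w w' P) : E P = E' P := by
  induction n using Nat.strong_induction_on generalizing P with
  | _ n ih =>
  obtain rfl | hn := eq_or_ne n 0
  · rw [totalDegree_eq_zero_iff_eq_C.1 (Nat.le_zero.1 hP.totalDegree_le), ← mul_one (C _),
      ← smul_eq_C_mul, map_smul, map_smul, h_one]
  · -- The two generators commute, so the Laplacian of `P`, of lower degree, inherits `h`.
    have h_comm := LinearMap.congr_fun (commute_gaussianLaplacian K u ū K' w w') P
    simp only [Module.End.mul_apply] at h_comm
    have h_lap : E (gaussianLaplacian K u ū P) = E' (gaussianLaplacian K u ū P) :=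
      ih (n - 1 - 1) (by lia) (isHomogeneous_gaussianLaplacian K u ū hP)
        (by rw [← h_comm, h])
    apply nsmul_right_injective hn
    simp only
    rw [hE.nsmul_apply hP, hE'.nsmul_apply hP, h_lap, h]

theorem IsGaussianFunctional.congr
    (hE : IsGaussianFunctional E (gaussianLaplacian K u ū))
    (hE' : IsGaussianFunctional E' (gaussianLaplacian K' w w')) (h_one : E 1 = E' 1)
    {P : MvPolynomial τ R} (h : gaussianLaplacian K u ū P = gaussianLaplacian K' w w' P) :
    E P = E' P := by
  rw [← sum_homogeneousComponent P, map_sum, map_sum]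
  refine Finset.sum_congr rfl fun n _ => ?_
  have hn := homogeneousComponent_isHomogeneous n P
  refine hE.congr_of_isHomogeneous hE' h_one hn ?_
  obtain hn2 | hn2 := lt_or_ge n 2
  · rw [gaussianLaplacian_eq_zero K u ū hn2 hn, gaussianLaplacian_eq_zero K' w w' hn2 hn]
  · obtain ⟨k, rfl⟩ := Nat.exists_eq_add_of_le' hn2
    rw [← homogeneousComponent_gaussianLaplacian, h, homogeneousComponent_gaussianLaplacian]

end GaussianLaplacian

section DetPoly

variable {R A ι : Type*} [CommRing R] [CommRing A] [Algebra R A] [DecidableEq ι]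

lemma derivation_prod (δ : Derivation R A A) (s : Finset ι) (f : ι → A) :
    δ (∏ i ∈ s, f i) = ∑ i ∈ s, (∏ j ∈ s.erase i, f j) * δ (f i) := by
  induction s using Finset.induction_on with
  | empty => simp
  | insert a s ha ih =>
    rw [Finset.prod_insert ha, Derivation.leibniz, ih, Finset.sum_insert ha,
      Finset.erase_insert ha, smul_eq_mul, smul_eq_mul, Finset.mul_sum, add_comm]
    congr 1
    refine Finset.sum_congr rfl fun i hi => ?_
    have hai : a ≠ i := fun h => ha (h ▸ hi)
    rw [Finset.erase_insert_of_ne hai, Finset.prod_insert (by simp [ha]), mul_assoc]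

variable [Fintype ι]

lemma derivation_det (δ : Derivation R A A) (M : Matrix ι ι A) :
    δ M.det = ∑ j, (M.updateCol j fun i => δ (M i j)).det := by
  have h (j : ι) (σ : Equiv.Perm ι) : ∏ i, M.updateCol j (fun i => δ (M i j)) (σ i) i =
      (∏ i ∈ Finset.univ.erase j, M (σ i) i) * δ (M (σ j) j) := by
    rw [← Finset.prod_erase_mul _ _ (Finset.mem_univ j), updateCol_self]
    congr 1
    exact Finset.prod_congr rfl fun i hi => updateCol_ne (Finset.ne_of_mem_erase hi)
  simp only [det_apply, map_sum, h, derivation_prod, Units.smul_def, map_zsmul, Finset.smul_sum]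
  exact Finset.sum_comm

open MvPolynomial

/-- The generic determinant `det (D + X)`, a polynomial in the entries of `X`. -/
def detPoly (D : Matrix ι ι R) : MvPolynomial (ι × ι) R :=
  (D.map C + mvPolynomialX ι ι R).det

lemma eval_detPoly (D : Matrix ι ι R) (x : ι × ι → R) :
    eval x (detPoly D) = (D + Matrix.of fun i j => x (i, j)).det := by
  rw [detPoly, RingHom.map_det]
  congr 1
  ext i j
  simp [mvPolynomialX]

lemma pderiv_detPoly (D : Matrix ι ι R) (p q : ι) :
    pderiv (p, q) (detPoly D) =
      ((D.map C + mvPolynomialX ι ι R).updateCol q (Pi.single p 1)).det := by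
  rw [detPoly, derivation_det, Finset.sum_eq_single q]
  · congr 2
    ext1 i
    simp [mvPolynomialX, pderiv_X, Pi.single_apply]
  · intro j _ hj
    refine det_eq_zero_of_column_eq_zero j fun i => ?_
    simp [mvPolynomialX, pderiv_X, hj]
  · simp

lemma pderiv_pderiv_detPoly (D : Matrix ι ι R) {p q r s : ι} (hqs : q ≠ s) :
    pderiv (r, s) (pderiv (p, q) (detPoly D)) =
      (((D.map C + mvPolynomialX ι ι R).updateCol q (Pi.single p 1)).updateCol s
        (Pi.single r 1)).det := by
  rw [pderiv_detPoly, derivation_det, Finset.sum_eq_single s]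
  · congr 2
    ext1 i
    simp [hqs.symm, mvPolynomialX, pderiv_X, Pi.single_apply]
  · intro j _ hj
    refine det_eq_zero_of_column_eq_zero j fun i => ?_
    obtain rfl | hq := eq_or_ne j q
    · obtain rfl | hp := eq_or_ne i p <;> simp [*]
    · simp [mvPolynomialX, pderiv_X, hj, hq]
  · simp

lemma pderiv_pderiv_detPoly_antisymm (D : Matrix ι ι R) {p q r s : ι} (hqs : q ≠ s) :
    pderiv (r, s) (pderiv (p, q) (detPoly D)) = -pderiv (r, q) (pderiv (p, s) (detPoly D)) := by
  set A := D.map C + mvPolynomialX ι ι R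
  have h_swap : (A.updateCol q (Pi.single p 1)).updateCol s (Pi.single r 1) =
      ((A.updateCol s (Pi.single p 1)).updateCol q (Pi.single r 1)).submatrix id
        (Equiv.swap q s) := by
    ext i j
    obtain rfl | hjs := eq_or_ne j s
    · simp
    obtain rfl | hjq := eq_or_ne j q
    · simp [hqs, hqs.symm]
    · simp [Equiv.swap_apply_of_ne_of_ne hjq hjs, hjq, hjs]
  rw [pderiv_pderiv_detPoly D hqs, pderiv_pderiv_detPoly D hqs.symm, h_swap, det_permute',
    Equiv.Perm.sign_swap hqs]
  simp [A]

end DetPoly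

section GaussianDecay

open Function Real

lemma one_add_pow_mul_exp_neg_le {c r : ℝ} (hc : 0 < c) (hr : 0 ≤ r) (p : ℕ) :
    (1 + r) ^ p * exp (-(c * r ^ 2)) ≤ p.factorial * exp (1 + 1 / (4 * c)) := by
  have h_pow : (1 + r) ^ p ≤ p.factorial * exp (1 + r) := by
    rw [← div_le_iff₀' (by positivity)]
    exact pow_div_factorial_le_exp _ (by positivity) p
  have h_exponent : 1 + r + -(c * r ^ 2) ≤ 1 + 1 / (4 * c) := by
    have h_square : 1 / (4 * c) - r + c * r ^ 2 = c * (r - 1 / (2 * c)) ^ 2 := by field_simp; ring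
    have h_nonneg : 0 ≤ c * (r - 1 / (2 * c)) ^ 2 := by positivity
    linarith
  calc (1 + r) ^ p * exp (-(c * r ^ 2))
      ≤ p.factorial * exp (1 + r) * exp (-(c * r ^ 2)) := by gcongr
    _ = p.factorial * exp (1 + r + -(c * r ^ 2)) := by rw [mul_assoc, ← exp_add]
    _ ≤ _ := by gcongr

variable {V : Type*} [NormedAddCommGroup V] [NormedSpace ℝ V] [FiniteDimensional ℝ V]
  [MeasurableSpace V] [BorelSpace V] (μ : Measure V) [μ.IsAddHaarMeasure]

lemma integrable_temperate_mul_cexp_neg {f h : V → ℂ} (hf : f.HasTemperateGrowth)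
    (hh : Continuous h) {c : ℝ} (hc : 0 < c) (hle : ∀ v, c * ‖v‖ ^ 2 ≤ (h v).re) :
    Integrable (fun v => f v * Complex.exp (-h v)) μ := by
  obtain ⟨k, C, hC, hfC⟩ := hf.norm_iteratedFDeriv_le_uniform 0
  set d := Module.finrank ℝ V + 1
  have h_tail : Integrable (fun v : V => (1 + ‖v‖) ^ (-(d : ℝ))) μ :=
    integrable_one_add_norm (by simp [d])
  refine (h_tail.const_mul (C * ((k + d).factorial * exp (1 + 1 / (4 * c))))).mono'
    (by have := hf.1.continuous; fun_prop) (ae_of_all _ fun v => ?_)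
  have h_f : ‖f v‖ ≤ C * (1 + ‖v‖) ^ k := by simpa using hfC 0 le_rfl v
  have h_exp : ‖Complex.exp (-h v)‖ ≤ exp (-(c * ‖v‖ ^ 2)) := by
    rw [Complex.norm_exp, Complex.neg_re]
    exact exp_le_exp.2 (neg_le_neg (hle v))
  rw [rpow_neg (by positivity), rpow_natCast, ← div_eq_mul_inv, le_div_iff₀ (by positivity)]
  calc ‖f v * Complex.exp (-h v)‖ * (1 + ‖v‖) ^ d
      ≤ C * (1 + ‖v‖) ^ k * exp (-(c * ‖v‖ ^ 2)) * (1 + ‖v‖) ^ d := by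
        rw [norm_mul]; gcongr
    _ = C * ((1 + ‖v‖) ^ (k + d) * exp (-(c * ‖v‖ ^ 2))) := by ring
    _ ≤ _ := mul_le_mul_of_nonneg_left (one_add_pow_mul_exp_neg_le hc (norm_nonneg v) _) hC

end GaussianDecay

section EvalAlongLinearMap

open MvPolynomial

variable {V τ : Type*} [NormedAddCommGroup V] [NormedSpace ℝ V] [Finite τ]

lemma hasTemperateGrowth_eval (T : V →L[ℝ] τ → ℂ) (P : MvPolynomial τ ℂ) :
    (fun v => eval (T v) P).HasTemperateGrowth := by
  cases nonempty_fintype τ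
  induction P using MvPolynomial.induction_on with
  | C a => simp
  | add P Q hP hQ => simp only [map_add]; exact hP.add hQ
  | mul_X P α hP =>
    simp only [map_mul, eval_X]
    exact hP.mul ((ContinuousLinearMap.proj α : (τ → ℂ) →L[ℝ] ℂ) ∘L T).hasTemperateGrowth

lemma fderiv_eval (T : V →L[ℝ] τ → ℂ) (P : MvPolynomial τ ℂ) (v w : V) :
    fderiv ℝ (fun v => eval (T v) P) v w = eval (T v) (dirDeriv (T w) P) := by
  cases nonempty_fintype τ
  have h_diff (P : MvPolynomial τ ℂ) : DifferentiableAt ℝ (fun v => eval (T v) P) v :=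
    (hasTemperateGrowth_eval T P).1.differentiable (by simp) v
  induction P using MvPolynomial.induction_on with
  | C a => simp
  | add P Q hP hQ => simp [fderiv_fun_add (h_diff P) (h_diff Q), hP, hQ]
  | mul_X P α hP =>
    have h_coord : fderiv ℝ (fun v => T v α) v w = T w α :=
      DFunLike.congr_fun ((ContinuousLinearMap.proj α : (τ → ℂ) →L[ℝ] ℂ) ∘L T).fderiv w
    have h_coord_diff : DifferentiableAt ℝ (fun v => T v α) v := by fun_prop
    simp [fderiv_fun_mul (h_diff P) h_coord_diff, hP, h_coord, Derivation.leibniz]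

end EvalAlongLinearMap

section PosDefForm

open scoped ComplexOrder MatrixOrder

variable {κ : Type*} [Fintype κ]

lemma star_dotProduct_conjTranspose_mul_mulVec (B : Matrix κ κ ℂ) (v : κ → ℂ) :
    star v ⬝ᵥ (Bᴴ * B) *ᵥ v = ((∑ i, ‖(B *ᵥ v) i‖ ^ 2 : ℝ) : ℂ) := by
  rw [← mulVec_mulVec, dotProduct_mulVec, ← star_mulVec]
  simp [dotProduct, Complex.conj_mul']

lemma pi_norm_sq_le_sum {E : Type*} [SeminormedAddCommGroup E] (v : κ → E) :
    ‖v‖ ^ 2 ≤ ∑ i, ‖v i‖ ^ 2 := by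
  rw [← Real.le_sqrt (norm_nonneg v) (by positivity), pi_norm_le_iff_of_nonneg (by positivity)]
  exact fun i => Real.le_sqrt_of_sq_le <|
    Finset.single_le_sum (f := fun i => ‖v i‖ ^ 2) (fun i _ => by positivity) (Finset.mem_univ i)

lemma exists_eq_conjTranspose_mul_self_of_posDef [DecidableEq κ] {A : Matrix κ κ ℂ}
    (hA : A.PosDef) :
    ∃ B : Matrix κ κ ℂ, B.det ≠ 0 ∧ A = Bᴴ * B := by
  obtain ⟨B, hB, rfl⟩ :=
    CStarAlgebra.isStrictlyPositive_iff_eq_star_mul_self.1 hA.isStrictlyPositive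
  exact ⟨B, ((isUnit_iff_isUnit_det B).1 hB).ne_zero, rfl⟩

lemma exists_forall_le_re_of_posDef {A : Matrix κ κ ℂ} (hA : A.PosDef) :
    ∃ c > 0, ∀ v : κ → ℂ, c * ‖v‖ ^ 2 ≤ (star v ⬝ᵥ A *ᵥ v).re := by
  classical
  obtain ⟨B, hB, rfl⟩ := exists_eq_conjTranspose_mul_self_of_posDef hA
  have h_inj : LinearMap.ker B.mulVecLin = ⊥ := by
    rw [LinearMap.ker_eq_bot]
    exact mulVec_injective_iff_isUnit.2 ((isUnit_iff_isUnit_det B).2 hB.isUnit)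
  obtain ⟨K, hK, hBK⟩ := B.mulVecLin.exists_antilipschitzWith h_inj
  refine ⟨((K : ℝ) ^ 2)⁻¹, by positivity, fun v => ?_⟩
  have h_norm : ‖v‖ ≤ K * ‖B *ᵥ v‖ := by simpa using hBK.le_mul_dist v 0
  rw [star_dotProduct_conjTranspose_mul_mulVec, Complex.ofReal_re, inv_mul_le_iff₀ (by positivity)]
  calc ‖v‖ ^ 2 ≤ (K * ‖B *ᵥ v‖) ^ 2 := by gcongr
    _ = K ^ 2 * ‖B *ᵥ v‖ ^ 2 := mul_pow _ _ _
    _ ≤ _ := by gcongr; exact pi_norm_sq_le_sum _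

end PosDefForm

section ComplexGaussian

open scoped ComplexOrder

variable {κ : Type*} [Fintype κ] [DecidableEq κ]

/-- The density of the centred circular complex Gaussian vector with precision matrix `A`
(covariance `A⁻¹`), as a complex-valued function. -/
def complexGaussianDensity (A : Matrix κ κ ℂ) (v : κ → ℂ) : ℂ :=
  ((Real.pi : ℂ) ^ Fintype.card κ)⁻¹ * A.det * Complex.exp (-(star v ⬝ᵥ A *ᵥ v))

lemma integral_exp_neg_sum_norm_sq (κ : Type*) [Fintype κ] :
    ∫ v : κ → ℂ, Complex.exp (-((∑ i, ‖v i‖ ^ 2 : ℝ) : ℂ)) = (Real.pi : ℂ) ^ Fintype.card κ := by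
  have h_site : ∫ a : ℂ, Complex.exp (-((‖a‖ ^ 2 : ℝ) : ℂ)) = Real.pi := by
    simpa using GaussianFourier.integral_cexp_neg_mul_sq_norm (V := ℂ) (b := 1) (by simp)
  have h_prod (v : κ → ℂ) : Complex.exp (-((∑ i, ‖v i‖ ^ 2 : ℝ) : ℂ)) =
      ∏ i, Complex.exp (-((‖v i‖ ^ 2 : ℝ) : ℂ)) := by
    rw [← Complex.exp_sum, Complex.ofReal_sum, Finset.sum_neg_distrib]
  simp only [h_prod]
  rw [integral_fintype_prod_volume_eq_prod fun _ a => Complex.exp (-((‖a‖ ^ 2 : ℝ) : ℂ)), h_site,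
    Finset.prod_const, Finset.card_univ]

lemma det_mulVecLin_restrictScalars (B : Matrix κ κ ℂ) :
    LinearMap.det (B.mulVecLin.restrictScalars ℝ) = ‖B.det‖ ^ 2 := by
  rw [LinearMap.det_restrictScalars, Algebra.norm_complex_eq, ← toLin'_apply', LinearMap.det_toLin']
  exact Complex.normSq_eq_norm_sq _

lemma integral_comp_linearMap {V E : Type*} [NormedAddCommGroup V] [NormedSpace ℝ V]
    [FiniteDimensional ℝ V] [MeasurableSpace V] [BorelSpace V] [NormedAddCommGroup E]
    [NormedSpace ℝ E] (μ : Measure V) [μ.IsAddHaarMeasure] {T : V →ₗ[ℝ] V}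
    (hT : LinearMap.det T ≠ 0) (f : V → E) :
    ∫ v, f (T v) ∂μ = |(LinearMap.det T)⁻¹| • ∫ v, f v ∂μ := by
  have h_emb : MeasurableEmbedding T :=
    (LinearMap.equivOfDetNeZero T hT).toContinuousLinearEquiv.toHomeomorph.measurableEmbedding
  rw [← h_emb.integral_map, Measure.map_linearMap_addHaar_eq_smul_addHaar μ hT,
    integral_smul_measure, ENNReal.toReal_ofReal (abs_nonneg _)]

lemma integral_comp_mulVec {E : Type*} [NormedAddCommGroup E] [NormedSpace ℝ E]
    {B : Matrix κ κ ℂ} (hB : B.det ≠ 0) (f : (κ → ℂ) → E) :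
    ∫ v, f (B *ᵥ v) = (‖B.det‖ ^ 2)⁻¹ • ∫ v, f v := by
  have h := integral_comp_linearMap volume (T := B.mulVecLin.restrictScalars ℝ)
    (by rw [det_mulVecLin_restrictScalars]; simpa) f
  rwa [det_mulVecLin_restrictScalars, abs_of_nonneg (by positivity)] at h

theorem integral_complexGaussianDensity {A : Matrix κ κ ℂ} (hA : A.PosDef) :
    ∫ v, complexGaussianDensity A v = 1 := by
  obtain ⟨B, hB, rfl⟩ := exists_eq_conjTranspose_mul_self_of_posDef hA
  have h_det : (Bᴴ * B).det = ((‖B.det‖ ^ 2 : ℝ) : ℂ) := by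
    rw [det_mul, det_conjTranspose]
    simpa using Complex.conj_mul' B.det
  simp only [complexGaussianDensity, star_dotProduct_conjTranspose_mul_mulVec]
  rw [integral_const_mul, integral_comp_mulVec hB fun v : κ → ℂ =>
    Complex.exp (-((∑ i, ‖v i‖ ^ 2 : ℝ) : ℂ)), integral_exp_neg_sum_norm_sq κ, h_det,
    Complex.real_smul]
  have h_ne : (‖B.det‖ : ℂ) ≠ 0 := by simpa
  push_cast
  field_simp

end ComplexGaussian

section WirtingerMap

open scoped ComplexConjugate

variable {κ τ : Type*} [Fintype κ]

/-- The real linear map `v ↦ ∑ i, (v i • u i + conj (v i) • ū i)`, which turns a complex Gaussian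
vector into a general centred complex-valued Gaussian family. -/
def wirtingerMap (u ū : κ → τ → ℂ) : (κ → ℂ) →L[ℝ] τ → ℂ :=
  ∑ i, ((ContinuousLinearMap.proj i : (κ → ℂ) →L[ℝ] ℂ).smulRight (u i) +
    (Complex.conjCLE ∘L ContinuousLinearMap.proj i : (κ → ℂ) →L[ℝ] ℂ).smulRight (ū i))

lemma wirtingerMap_apply (u ū : κ → τ → ℂ) (v : κ → ℂ) :
    wirtingerMap u ū v = ∑ i, (v i • u i + conj (v i) • ū i) := by
  simp [wirtingerMap]

lemma wirtingerMap_add_I_smul (u ū : κ → τ → ℂ) (w : κ → ℂ) :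
    wirtingerMap u ū w + Complex.I • wirtingerMap u ū (Complex.I • w) =
      (2 : ℂ) • ∑ j, conj (w j) • ū j := by
  ext α
  simp only [wirtingerMap_apply, Pi.add_apply, Pi.smul_apply, Finset.sum_apply, smul_eq_mul,
    Pi.add_apply, Finset.mul_sum, ← Finset.sum_add_distrib, map_mul, Complex.conj_I]
  refine Finset.sum_congr rfl fun j _ => ?_
  linear_combination (w j * u j α - conj (w j) * ū j α) * Complex.I_sq

lemma wirtingerMap_sub_I_smul (u ū : κ → τ → ℂ) (w : κ → ℂ) :
    wirtingerMap u ū w - Complex.I • wirtingerMap u ū (Complex.I • w) =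
      (2 : ℂ) • ∑ j, w j • u j := by
  ext α
  simp only [wirtingerMap_apply, Pi.sub_apply, Pi.smul_apply, Finset.sum_apply, smul_eq_mul,
    Pi.add_apply, Finset.mul_sum, ← Finset.sum_sub_distrib, map_mul, Complex.conj_I]
  refine Finset.sum_congr rfl fun j _ => ?_
  linear_combination (conj (w j) * ū j α - w j * u j α) * Complex.I_sq

end WirtingerMap

section GaussianIntegrationByParts

open scoped ComplexOrder ComplexConjugate
open MvPolynomial (eval X pderiv)

variable {κ τ : Type*} [Fintype κ]

lemma hasTemperateGrowth_dotProduct_mulVec_add (A : Matrix κ κ ℂ) (w : κ → ℂ) :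
    (fun v => star w ⬝ᵥ A *ᵥ v + star v ⬝ᵥ A *ᵥ w).HasTemperateGrowth := by
  have h_left := ((dotProductBilin ℝ ℝ (star w)) ∘ₗ
    A.mulVecLin.restrictScalars ℝ).toContinuousLinearMap.hasTemperateGrowth
  have h_right := ((dotProductBilin ℝ ℝ).flip (A *ᵥ w) ∘ₗ
    (starLinearEquiv ℝ : (κ → ℂ) ≃ₗ⋆[ℝ] κ → ℂ).toLinearMap).toContinuousLinearMap.hasTemperateGrowth
  exact h_left.add h_right

variable [DecidableEq κ] {A : Matrix κ κ ℂ}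

lemma mulVec_inv_col (hA : A.PosDef) (i : κ) : A *ᵥ A⁻¹.col i = Pi.single i 1 := by
  rw [← mulVec_single_one, mulVec_mulVec, mul_nonsing_inv _ hA.det_pos.ne'.isUnit, one_mulVec]

lemma hasLineDerivAt_complexGaussianDensity (A : Matrix κ κ ℂ) (v w : κ → ℂ) :
    HasLineDerivAt ℝ (complexGaussianDensity A)
      (-((star w ⬝ᵥ A *ᵥ v + star v ⬝ᵥ A *ᵥ w) * complexGaussianDensity A v)) v w := by
  have h_expand (t : ℝ) : -(star (v + t • w) ⬝ᵥ A *ᵥ (v + t • w)) =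
      -(star v ⬝ᵥ A *ᵥ v + t * (star w ⬝ᵥ A *ᵥ v + star v ⬝ᵥ A *ᵥ w)
        + t ^ 2 * (star w ⬝ᵥ A *ᵥ w)) := by
    simp only [star_add, star_smul, star_trivial, mulVec_add, mulVec_smul, add_dotProduct,
      dotProduct_add, smul_dotProduct, dotProduct_smul, Complex.real_smul]
    ring
  have h_id := (hasDerivAt_id (0 : ℝ)).ofReal_comp
  have h_quad := (((h_id.mul_const (star w ⬝ᵥ A *ᵥ v + star v ⬝ᵥ A *ᵥ w)).const_add
    (star v ⬝ᵥ A *ᵥ v)).add ((h_id.pow 2).mul_const (star w ⬝ᵥ A *ᵥ w))).neg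
  have h := h_quad.cexp.const_mul (((Real.pi : ℂ) ^ Fintype.card κ)⁻¹ * A.det)
  unfold HasLineDerivAt
  simp only [complexGaussianDensity, h_expand]
  refine h.congr_deriv ?_
  simp
  ring

lemma integrable_mul_complexGaussianDensity (hA : A.PosDef) {f : (κ → ℂ) → ℂ}
    (hf : f.HasTemperateGrowth) : Integrable fun v => f v * complexGaussianDensity A v := by
  obtain ⟨c, hc, hle⟩ := exists_forall_le_re_of_posDef hA
  refine ((integrable_temperate_mul_cexp_neg volume hf (by fun_prop) hc hle).const_mul
    (((Real.pi : ℂ) ^ Fintype.card κ)⁻¹ * A.det)).congr (ae_of_all _ fun v => ?_)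
  simp only [complexGaussianDensity]
  ring

variable [Finite τ] (T : (κ → ℂ) →L[ℝ] τ → ℂ) (P : MvPolynomial τ ℂ)

lemma integrable_eval_mul_complexGaussianDensity (hA : A.PosDef) :
    Integrable fun v => eval (T v) P * complexGaussianDensity A v :=
  integrable_mul_complexGaussianDensity hA (hasTemperateGrowth_eval T P)

/-- The expectation of a polynomial in the coordinates of `T v`, where `v` is the centred circular
complex Gaussian vector with precision matrix `A`. -/
def complexGaussianExpectation (hA : A.PosDef) : MvPolynomial τ ℂ →ₗ[ℂ] ℂ where
  toFun P := ∫ v, eval (T v) P * complexGaussianDensity A v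
  map_add' P Q := by
    simp only [map_add, add_mul]
    exact integral_add (integrable_eval_mul_complexGaussianDensity T P hA)
      (integrable_eval_mul_complexGaussianDensity T Q hA)
  map_smul' a P := by
    simp only [MvPolynomial.smul_eval, mul_assoc, integral_const_mul, RingHom.id_apply, smul_eq_mul]

lemma complexGaussianExpectation_apply (hA : A.PosDef) :
    complexGaussianExpectation T hA P = ∫ v, eval (T v) P * complexGaussianDensity A v :=
  rfl

lemma complexGaussianExpectation_one (hA : A.PosDef) : complexGaussianExpectation T hA 1 = 1 := by
  simp [complexGaussianExpectation_apply, integral_complexGaussianDensity hA]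

lemma complexGaussianExpectation_dirDeriv (hA : A.PosDef) (w : κ → ℂ) :
    complexGaussianExpectation T hA (dirDeriv (T w) P) =
      ∫ v, eval (T v) P *
        ((star w ⬝ᵥ A *ᵥ v + star v ⬝ᵥ A *ᵥ w) * complexGaussianDensity A v) := by
  have h_f := hasTemperateGrowth_eval T P
  have h_parts := integral_bilinear_hasLineDerivAt_right_eq_neg_left_of_integrable (μ := volume)
    (f := fun v => eval (T v) P) (f' := fun v => eval (T v) (dirDeriv (T w) P))
    (g := complexGaussianDensity A) (v := w) (B := ContinuousLinearMap.mul ℝ ℂ)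
    (integrable_eval_mul_complexGaussianDensity T _ hA)
    (by simpa [mul_assoc] using (integrable_mul_complexGaussianDensity hA
      (h_f.mul (hasTemperateGrowth_dotProduct_mulVec_add A w))).neg)
    (integrable_eval_mul_complexGaussianDensity T _ hA)
    (fun v _ => by
      rw [← fderiv_eval]
      exact (h_f.1.differentiable (by simp) v).hasFDerivAt.hasLineDerivAt w)
    (fun v _ => hasLineDerivAt_complexGaussianDensity A v w)
  simpa [integral_neg, complexGaussianExpectation_apply] using h_parts.symm

lemma integrable_eval_mul_dotProduct_mulVec_add (hA : A.PosDef) (w : κ → ℂ) :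
    Integrable fun v => eval (T v) P *
      ((star w ⬝ᵥ A *ᵥ v + star v ⬝ᵥ A *ᵥ w) * complexGaussianDensity A v) := by
  simpa [mul_assoc] using integrable_mul_complexGaussianDensity hA
    ((hasTemperateGrowth_eval T P).mul (hasTemperateGrowth_dotProduct_mulVec_add A w))

lemma complexGaussianExpectation_dirDeriv_add_I_smul (hA : A.PosDef) (w : κ → ℂ) :
    complexGaussianExpectation T hA (dirDeriv (T w + Complex.I • T (Complex.I • w)) P) =
      2 * ∫ v, eval (T v) P * ((star w ⬝ᵥ A *ᵥ v) * complexGaussianDensity A v) := by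
  rw [map_add, map_smul, Derivation.add_apply, Derivation.smul_apply, map_add, map_smul,
    complexGaussianExpectation_dirDeriv, complexGaussianExpectation_dirDeriv, smul_eq_mul,
    ← integral_const_mul, ← integral_const_mul,
    ← integral_add (integrable_eval_mul_dotProduct_mulVec_add T P hA w)
      ((integrable_eval_mul_dotProduct_mulVec_add T P hA _).const_mul _)]
  congr with v
  simp only [star_smul, mulVec_smul, smul_dotProduct, dotProduct_smul, smul_eq_mul,
    Complex.star_def, Complex.conj_I]
  linear_combination (eval (T v) P * complexGaussianDensity A v *
    (star v ⬝ᵥ A *ᵥ w - star w ⬝ᵥ A *ᵥ v)) * Complex.I_sq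

lemma complexGaussianExpectation_dirDeriv_sub_I_smul (hA : A.PosDef) (w : κ → ℂ) :
    complexGaussianExpectation T hA (dirDeriv (T w - Complex.I • T (Complex.I • w)) P) =
      2 * ∫ v, eval (T v) P * ((star v ⬝ᵥ A *ᵥ w) * complexGaussianDensity A v) := by
  rw [map_sub, map_smul, Derivation.sub_apply, Derivation.smul_apply, map_sub, map_smul,
    complexGaussianExpectation_dirDeriv, complexGaussianExpectation_dirDeriv, smul_eq_mul,
    ← integral_const_mul, ← integral_const_mul,
    ← integral_sub (integrable_eval_mul_dotProduct_mulVec_add T P hA w)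
      ((integrable_eval_mul_dotProduct_mulVec_add T P hA _).const_mul _)]
  congr with v
  simp only [star_smul, mulVec_smul, smul_dotProduct, dotProduct_smul, smul_eq_mul,
    Complex.star_def, Complex.conj_I]
  linear_combination (eval (T v) P * complexGaussianDensity A v *
    (star w ⬝ᵥ A *ᵥ v - star v ⬝ᵥ A *ᵥ w)) * Complex.I_sq

variable (u ū : κ → τ → ℂ)

lemma integral_eval_mul_coord (hA : A.PosDef) (i : κ) :
    ∫ v, eval (wirtingerMap u ū v) P * (v i * complexGaussianDensity A v) =
      complexGaussianExpectation (wirtingerMap u ū) hA (dirDeriv (∑ j, A⁻¹ i j • ū j) P) := by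
  have h_coord (v : κ → ℂ) : star (A⁻¹.col i) ⬝ᵥ A *ᵥ v = v i := by
    rw [dotProduct_mulVec, ← congrArg (star _ ᵥ* ·) hA.isHermitian, ← star_mulVec,
      mulVec_inv_col hA]
    simp
  have h := complexGaussianExpectation_dirDeriv_add_I_smul (wirtingerMap u ū) P hA (A⁻¹.col i)
  simp only [h_coord, wirtingerMap_add_I_smul, col_apply, ← Complex.star_def,
    hA.isHermitian.inv.apply] at h
  simpa [-map_sum] using h.symm

lemma integral_eval_mul_conj_coord (hA : A.PosDef) (i : κ) :
    ∫ v, eval (wirtingerMap u ū v) P * (conj (v i) * complexGaussianDensity A v) =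
      complexGaussianExpectation (wirtingerMap u ū) hA (dirDeriv (∑ j, A⁻¹ j i • u j) P) := by
  have h_coord (v : κ → ℂ) : star v ⬝ᵥ A *ᵥ A⁻¹.col i = conj (v i) := by
    simp [mulVec_inv_col hA]
  have h := complexGaussianExpectation_dirDeriv_sub_I_smul (wirtingerMap u ū) P hA (A⁻¹.col i)
  simp only [h_coord, wirtingerMap_sub_I_smul, col_apply] at h
  simpa [-map_sum] using h.symm

end GaussianIntegrationByParts

section GaussianFunctional

open scoped ComplexOrder ComplexConjugate
open MvPolynomial (eval X pderiv)

variable {κ τ : Type*} [Fintype κ] [Fintype τ] (u ū : κ → τ → ℂ)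

lemma eval_wirtingerMap_sum_X_mul_pderiv (v : κ → ℂ) (P : MvPolynomial τ ℂ) :
    eval (wirtingerMap u ū v) (∑ α, X α * pderiv α P) =
      ∑ i, (eval (wirtingerMap u ū v) (dirDeriv (u i) P) * v i +
        eval (wirtingerMap u ū v) (dirDeriv (ū i) P) * conj (v i)) := by
  rw [eval_sum_X_mul_pderiv]
  conv_lhs => enter [2, 1, 2]; rw [wirtingerMap_apply]
  rw [dirDeriv_sum_apply, map_sum]
  simp [mul_comm]

variable [DecidableEq κ] {A : Matrix κ κ ℂ}

theorem isGaussianFunctional_complexGaussianExpectation (hA : A.PosDef) :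
    IsGaussianFunctional (complexGaussianExpectation (wirtingerMap u ū) hA)
      (gaussianLaplacian A⁻¹ u ū) := by
  intro P
  set T := wirtingerMap u ū with hT
  have h_int_coord (i : κ) : Integrable fun v =>
      eval (T v) (dirDeriv (u i) P) * v i * complexGaussianDensity A v :=
    integrable_mul_complexGaussianDensity hA ((hasTemperateGrowth_eval T _).mul
      (ContinuousLinearMap.proj i : (κ → ℂ) →L[ℝ] ℂ).hasTemperateGrowth)
  have h_int_conj (i : κ) : Integrable fun v =>
      eval (T v) (dirDeriv (ū i) P) * conj (v i) * complexGaussianDensity A v :=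
    integrable_mul_complexGaussianDensity hA ((hasTemperateGrowth_eval T _).mul
      (Complex.conjCLE.toContinuousLinearMap.hasTemperateGrowth.comp
        (ContinuousLinearMap.proj i : (κ → ℂ) →L[ℝ] ℂ).hasTemperateGrowth))
  calc complexGaussianExpectation T hA (∑ α, X α * pderiv α P)
      = ∑ i, ((∫ v, eval (T v) (dirDeriv (u i) P) * v i * complexGaussianDensity A v) +
          ∫ v, eval (T v) (dirDeriv (ū i) P) * conj (v i) * complexGaussianDensity A v) := by
        simp only [complexGaussianExpectation_apply, hT,
          eval_wirtingerMap_sum_X_mul_pderiv, Finset.sum_mul, add_mul]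
        refine (integral_finsetSum _ fun i _ => (h_int_coord i).add (h_int_conj i)).trans ?_
        exact Finset.sum_congr rfl fun i _ => integral_add (h_int_coord i) (h_int_conj i)
    _ = ∑ i, complexGaussianExpectation T hA (∑ j, A⁻¹ i j • dirDeriv (u i) (dirDeriv (ū j) P)) +
          ∑ i, complexGaussianExpectation T hA
            (∑ j, A⁻¹ j i • dirDeriv (u j) (dirDeriv (ū i) P)) := by
        rw [← Finset.sum_add_distrib]
        refine Finset.sum_congr rfl fun i _ => ?_
        have h_swap (j : κ) := LinearMap.congr_fun (commute_dirDeriv (ū j) (u i)) P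
        simp only [Module.End.mul_apply, Derivation.coeFn_coe] at h_swap
        simp only [hT, mul_assoc, integral_eval_mul_coord _ u ū hA,
          integral_eval_mul_conj_coord _ u ū hA, dirDeriv_sum_apply,
          map_smul, Derivation.smul_apply, h_swap]
    _ = 2 • complexGaussianExpectation T hA (gaussianLaplacian A⁻¹ u ū P) := by
        rw [← map_sum, ← map_sum, Finset.sum_comm (f := fun i j => A⁻¹ j i • _),
          ← gaussianLaplacian_apply, two_smul]

end GaussianFunctional

section Duality

open scoped ComplexOrder ComplexConjugate Kronecker
open MvPolynomial (pderiv)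

variable {m n : Type*} [DecidableEq m] [DecidableEq n]

/-- The block matrix `[[ẑ, iQ], [iQᴴ, ẑᴴ]]` with `ẑ = diag(z)`; it is `Qcal z₁ z₂` when
`z = ![z₁, z₂]`. -/
def replicaBlock (z : m → ℂ) (Q : Matrix m m ℂ) : Matrix (m ⊕ m) (m ⊕ m) ℂ :=
  fromBlocks (diagonal z) (Complex.I • Q) (Complex.I • Qᴴ) (diagonal (star z))

/-- The deterministic part `diag(z, z̄) ⊗ 1` of the two matrices of size `2|m||n|` compared by
`integral_norm_det_sq_eq_integral_det_replicaBlock`. -/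
def replicaDiagonal (z : m → ℂ) : Matrix ((m ⊕ m) × n) ((m ⊕ m) × n) ℂ :=
  diagonal fun i => Sum.elim z (star z) i.1

/-- The linear coefficient of `H p.1 p.2` in the entries of the block diagonal matrix whose blocks
are `|m|` copies of `-H` and `|m|` copies of `-Hᴴ`. -/
def bandDir [Fintype m] (p : n × n) : ((m ⊕ m) × n) × ((m ⊕ m) × n) → ℂ :=
  -∑ a, Pi.single ((.inl a, p.1), (.inl a, p.2)) 1

/-- The linear coefficient of `conj (H p.1 p.2)` in the same matrix as for `bandDir`. -/
def bandConjDir [Fintype m] (p : n × n) : ((m ⊕ m) × n) × ((m ⊕ m) × n) → ℂ :=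
  -∑ b, Pi.single ((.inr b, p.2), (.inr b, p.1)) 1

/-- The linear coefficient of `Q j a b`, for `p = (j, a, b)`, in the entries of the block diagonal
matrix with the blocks `[[0, i Q j], [i (Q j)ᴴ, 0]]`, `j : n`. -/
def siteDir (p : n × m × m) : ((m ⊕ m) × n) × ((m ⊕ m) × n) → ℂ :=
  Complex.I • Pi.single ((.inl p.2.1, p.1), (.inr p.2.2, p.1)) 1

/-- The linear coefficient of `conj (Q j a b)`, for `p = (j, a, b)`, in the same matrix as for
`siteDir`. -/
def siteConjDir (p : n × m × m) : ((m ⊕ m) × n) × ((m ⊕ m) × n) → ℂ :=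
  Complex.I • Pi.single ((.inr p.2.2, p.1), (.inl p.2.1, p.1)) 1

variable [Fintype m] [Fintype n]

lemma det_replicaDiagonal_add_wirtingerMap_siteDir (z : m → ℂ) (Q : n × m × m → ℂ) :
    (replicaDiagonal z + Matrix.of fun i j => wirtingerMap siteDir siteConjDir Q (i, j)).det =
      ∏ j, (replicaBlock z (Matrix.of fun a b => Q (j, a, b))).det := by
  rw [← det_blockDiagonal]
  congr 1
  ext ⟨s, j⟩ ⟨t, k⟩
  rcases s with a | a <;> rcases t with b | b <;>
    obtain rfl | ⟨h, h'⟩ : j = k ∨ j ≠ k ∧ k ≠ j := by tauto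
  all_goals
    simp [*, wirtingerMap_apply, siteDir, siteConjDir, replicaDiagonal, replicaBlock,
      blockDiagonal_apply, diagonal_apply, Pi.single_apply, Fintype.sum_prod_type, ite_and,
      Finset.sum_add_distrib, mul_comm]

lemma det_replicaDiagonal_add_wirtingerMap_bandDir (z : m → ℂ) (H : n × n → ℂ) :
    (replicaDiagonal z + Matrix.of fun i j => wirtingerMap bandDir bandConjDir H (i, j)).det =
      ∏ a, (‖(Matrix.of (fun j k => H (j, k)) - z a • 1).det‖ ^ 2 : ℂ) := by
  let M : m ⊕ m → Matrix n n ℂ :=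
    Sum.elim (fun a => z a • 1 - Matrix.of fun j k => H (j, k))
      (fun a => (z a • 1 - Matrix.of fun j k => H (j, k))ᴴ)
  have h_blocks :
      replicaDiagonal z + Matrix.of (fun i j => wirtingerMap bandDir bandConjDir H (i, j)) =
        (blockDiagonal M).submatrix (Equiv.prodComm _ _) (Equiv.prodComm _ _) := by
    ext ⟨s, j⟩ ⟨t, k⟩
    rcases s with a | a <;> rcases t with b | b <;>
      obtain rfl | ⟨h, h'⟩ : a = b ∨ a ≠ b ∧ b ≠ a := by tauto
    all_goals
      simp [*, M, wirtingerMap_apply, bandDir, bandConjDir, replicaDiagonal, blockDiagonal_apply,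
        diagonal_apply, Pi.single_apply, Fintype.sum_prod_type, ite_and, Finset.sum_add_distrib,
        one_apply, sub_eq_add_neg]
  have h_norm (a : m) : ‖(Matrix.of (fun j k => H (j, k)) - z a • 1).det‖ = ‖(M (.inl a)).det‖ := by
    rw [← neg_sub, det_neg, norm_mul, norm_pow, norm_neg, norm_one, one_pow, one_mul]
    rfl
  rw [h_blocks, det_submatrix_equiv_self, det_blockDiagonal, Fintype.prod_sum_type,
    ← Finset.prod_mul_distrib]
  refine Finset.prod_congr rfl fun a _ => ?_
  rw [h_norm, ← Complex.mul_conj', ← Complex.star_def, ← det_conjTranspose]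
  rfl

lemma gaussianLaplacian_bandDir_detPoly (J : Matrix n n ℂ)
    (D : Matrix ((m ⊕ m) × n) ((m ⊕ m) × n) ℂ) :
    gaussianLaplacian (diagonal fun p : n × n => J p.1 p.2) bandDir bandConjDir (detPoly D) =
      gaussianLaplacian (J ⊗ₖ (1 : Matrix (m × m) (m × m) ℂ)) siteDir siteConjDir (detPoly D) := by
  have h_band (j k : n) : dirDeriv (bandDir (j, k)) (dirDeriv (bandConjDir (j, k)) (detPoly D)) =
      ∑ a : m, ∑ b : m, pderiv ((.inl a, j), (.inl a, k))
        (pderiv ((.inr b, k), (.inr b, j)) (detPoly D)) := by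
    simp only [bandDir, bandConjDir, map_neg, Derivation.neg_apply, neg_neg, dirDeriv_sum_apply,
      dirDeriv_single]
    simp only [map_sum]
  have h_site (j k : n) (a b : m) :
      dirDeriv (siteDir (j, a, b)) (dirDeriv (siteConjDir (k, a, b)) (detPoly D)) =
        -pderiv ((.inl a, j), (.inr b, j)) (pderiv ((.inr b, k), (.inl a, k)) (detPoly D)) := by
    simp only [siteDir, siteConjDir, map_smul, Derivation.smul_apply, dirDeriv_single]
    rw [Derivation.map_smul, smul_smul, Complex.I_mul_I, neg_one_smul]
  calc gaussianLaplacian (diagonal fun p : n × n => J p.1 p.2) bandDir bandConjDir (detPoly D)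
      = ∑ j, ∑ k, ∑ a : m, ∑ b : m, J j k • pderiv ((.inl a, j), (.inl a, k))
          (pderiv ((.inr b, k), (.inr b, j)) (detPoly D)) := by
        simp [gaussianLaplacian_apply, diagonal_apply, h_band, Fintype.sum_prod_type,
          Finset.smul_sum]
    _ = ∑ j, ∑ k, ∑ a : m, ∑ b : m, -(J j k • pderiv ((.inl a, j), (.inr b, j))
          (pderiv ((.inr b, k), (.inl a, k)) (detPoly D))) := by
        refine Finset.sum_congr rfl fun j _ => Finset.sum_congr rfl fun k _ =>
          Finset.sum_congr rfl fun a _ => Finset.sum_congr rfl fun b _ => ?_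
        rw [pderiv_pderiv_detPoly_antisymm D (by simp), smul_neg]
    _ = gaussianLaplacian (J ⊗ₖ (1 : Matrix (m × m) (m × m) ℂ)) siteDir siteConjDir
          (detPoly D) := by
        simp only [gaussianLaplacian_apply, Fintype.sum_prod_type]
        refine Finset.sum_congr rfl fun j _ => ?_
        rw [Finset.sum_comm]
        refine Finset.sum_congr rfl fun a _ => ?_
        rw [Finset.sum_comm]
        simp [one_apply, h_site, ite_and]

theorem integral_norm_det_sq_eq_integral_det_replicaBlock {J : Matrix n n ℂ} (hJ : J.PosDef)
    (hJ_pos : ∀ j k, 0 < J j k) (z : m → ℂ) :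
    ∫ H : n × n → ℂ, (∏ a, (‖(Matrix.of (fun j k => H (j, k)) - z a • 1).det‖ ^ 2 : ℂ)) *
        complexGaussianDensity (diagonal fun p : n × n => (J p.1 p.2)⁻¹) H =
      ∫ Q : n × m × m → ℂ, (∏ j, (replicaBlock z (Matrix.of fun a b => Q (j, a, b))).det) *
        complexGaussianDensity (J⁻¹ ⊗ₖ (1 : Matrix (m × m) (m × m) ℂ)) Q := by
  have h_band : (diagonal fun p : n × n => (J p.1 p.2)⁻¹).PosDef :=
    PosDef.diagonal fun p => inv_pos.2 (hJ_pos p.1 p.2)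
  have h_site : (J⁻¹ ⊗ₖ (1 : Matrix (m × m) (m × m) ℂ)).PosDef := hJ.inv.kronecker PosDef.one
  have h_band_inv : (diagonal fun p : n × n => (J p.1 p.2)⁻¹)⁻¹ =
      diagonal fun p : n × n => J p.1 p.2 :=
    inv_eq_left_inv <| by simp [(hJ_pos _ _).ne', diagonal_mul_diagonal]
  have h_site_inv : (J⁻¹ ⊗ₖ (1 : Matrix (m × m) (m × m) ℂ))⁻¹ = J ⊗ₖ 1 := by
    rw [inv_kronecker, nonsing_inv_nonsing_inv _ hJ.det_pos.ne'.isUnit, inv_one]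
  have h_gaussian_band := isGaussianFunctional_complexGaussianExpectation
    (bandDir (m := m)) bandConjDir h_band
  have h_gaussian_site := isGaussianFunctional_complexGaussianExpectation
    (siteDir (m := m)) siteConjDir h_site
  rw [h_band_inv] at h_gaussian_band
  rw [h_site_inv] at h_gaussian_site
  have h := h_gaussian_band.congr h_gaussian_site
    (by simp only [complexGaussianExpectation_one])
    (gaussianLaplacian_bandDir_detPoly J (replicaDiagonal z))
  simpa only [complexGaussianExpectation_apply, eval_detPoly,
    det_replicaDiagonal_add_wirtingerMap_bandDir, det_replicaDiagonal_add_wirtingerMap_siteDir]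
    using h

end Duality

section GraphLaplacian

open scoped ComplexOrder

variable {V : Type*} [Fintype V] [DecidableEq V] {G : SimpleGraph V} [DecidableRel G.Adj]

lemma star_dotProduct_lapMatrix_mulVec (x : V → ℂ) :
    star x ⬝ᵥ G.lapMatrix ℂ *ᵥ x =
      ((∑ i, ∑ j, if G.Adj i j then ‖x i - x j‖ ^ 2 else 0 : ℝ) / 2 : ℂ) := by
  have h_apply (i : V) : (G.lapMatrix ℂ *ᵥ x) i = ∑ j, if G.Adj i j then x i - x j else 0 := by
    rw [SimpleGraph.lapMatrix_mulVec_apply, SimpleGraph.degree_eq_sum_if_adj,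
      SimpleGraph.neighborFinset_eq_filter, Finset.sum_filter, Finset.sum_mul,
      ← Finset.sum_sub_distrib]
    exact Finset.sum_congr rfl fun j _ => by split_ifs <;> simp
  have h_form : star x ⬝ᵥ G.lapMatrix ℂ *ᵥ x =
      ∑ i, ∑ j, if G.Adj i j then star (x i) * (x i - x j) else 0 := by
    simp only [dotProduct, h_apply, Finset.mul_sum, mul_ite, mul_zero, Pi.star_apply]
  rw [eq_div_iff two_ne_zero, mul_two]
  nth_rw 1 [h_form]
  rw [h_form.trans Finset.sum_comm, ← Finset.sum_add_distrib]
  push_cast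
  refine Finset.sum_congr rfl fun i _ => ?_
  rw [← Finset.sum_add_distrib]
  refine Finset.sum_congr rfl fun j _ => ?_
  simp only [G.adj_comm j i]
  split_ifs
  · rw [Complex.ofReal_pow, ← Complex.mul_conj', map_sub, ← Complex.star_def]
    ring
  · simp

lemma posDef_smul_lapMatrix_add_one {c : ℝ} (hc : 0 ≤ c) :
    ((c : ℂ) • G.lapMatrix ℂ + 1).PosDef := by
  have h_lap : (G.lapMatrix ℂ).PosSemidef :=
    .of_dotProduct_mulVec_nonneg (G.isHermitian_lapMatrix ℂ) fun x => by
      rw [star_dotProduct_lapMatrix_mulVec, ← Complex.ofReal_ofNat, ← Complex.ofReal_div,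
        Complex.zero_le_real]
      positivity
  exact PosDef.one.posSemidef_add (h_lap.smul (by exact_mod_cast hc))

-- A discrete minimum principle.
lemma pos_of_smul_lapMatrix_add_one_mulVec_nonneg (hG : G.Preconnected) {c : ℝ} (hc : 0 < c)
    {x : V → ℝ} (hx : 0 ≤ (c • G.lapMatrix ℝ + 1) *ᵥ x) (hx_ne : x ≠ 0) (i : V) : 0 < x i := by
  have h_nonneg (i : V) : c * ∑ u ∈ G.neighborFinset i, (x u - x i) ≤ x i := by
    have h := hx i
    simp only [add_mulVec, smul_mulVec, one_mulVec, Pi.add_apply, Pi.smul_apply, Pi.zero_apply,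
      SimpleGraph.lapMatrix_mulVec_apply, smul_eq_mul] at h
    rw [Finset.sum_sub_distrib, Finset.sum_const, SimpleGraph.card_neighborFinset_eq_degree,
      nsmul_eq_mul]
    linarith
  have h_ge (i : V) : 0 ≤ x i := by
    obtain ⟨i₀, -, h_min⟩ := Finset.univ.exists_min_image x ⟨i, Finset.mem_univ i⟩
    have h_min_nonneg : 0 ≤ x i₀ := (mul_nonneg hc.le <| Finset.sum_nonneg fun u _ =>
      sub_nonneg.2 <| h_min u (Finset.mem_univ u)).trans (h_nonneg i₀)
    exact h_min_nonneg.trans (h_min i (Finset.mem_univ i))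
  have h_adj {i j : V} (hij : G.Adj i j) (hi : x i = 0) : x j = 0 := by
    have h := h_nonneg i
    simp only [hi, sub_zero] at h
    have h_sum := (Finset.sum_eq_zero_iff_of_nonneg fun u _ => h_ge u).1 <|
      (nonpos_of_mul_nonpos_right h hc).antisymm (Finset.sum_nonneg fun u _ => h_ge u)
    exact h_sum j (by simpa using hij)
  refine (h_ge i).lt_of_ne' fun hi => hx_ne ?_
  ext j
  obtain ⟨p⟩ := hG i j
  induction p with
  | nil => exact hi
  | cons hij _ ih => exact ih (h_adj hij hi)

lemma isUnit_det_smul_lapMatrix_add_one {c : ℝ} (hc : 0 ≤ c) :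
    IsUnit (c • G.lapMatrix ℝ + 1).det :=
  (PosDef.one.posSemidef_add ((G.posSemidef_lapMatrix ℝ).smul hc)).det_pos.ne'.isUnit

lemma smul_lapMatrix_add_one_inv_pos (hG : G.Preconnected) {c : ℝ} (hc : 0 < c) (i j : V) :
    0 < (c • G.lapMatrix ℝ + 1)⁻¹ i j := by
  set A := c • G.lapMatrix ℝ + 1
  have h_unit : IsUnit A.det := isUnit_det_smul_lapMatrix_add_one hc.le
  have h_col : A *ᵥ A⁻¹.col j = Pi.single j 1 := by
    rw [← mulVec_single_one, mulVec_mulVec, mul_nonsing_inv _ h_unit, one_mulVec]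
  refine pos_of_smul_lapMatrix_add_one_mulVec_nonneg (x := A⁻¹.col j) hG hc ?_ (fun h => ?_) i
  · exact (Pi.single_nonneg.2 zero_le_one).trans_eq h_col.symm
  · exact one_ne_zero <| (Pi.single_eq_zero_iff (i := j)).1 (by rw [← h_col, h, mulVec_zero])

lemma map_smul_lapMatrix_add_one_inv {c : ℝ} (hc : 0 ≤ c) :
    (c • G.lapMatrix ℝ + 1)⁻¹.map Complex.ofReal = ((c : ℂ) • G.lapMatrix ℂ + 1)⁻¹ := by
  have h_map : (c • G.lapMatrix ℝ + 1).map Complex.ofReal = (c : ℂ) • G.lapMatrix ℂ + 1 := by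
    ext i j
    simp [SimpleGraph.lapMatrix, SimpleGraph.degMatrix, diagonal_apply, one_apply,
      SimpleGraph.adjMatrix_apply, apply_ite Complex.ofReal]
  rw [← h_map]
  refine (inv_eq_left_inv ?_).symm
  have h := congrArg Complex.ofRealHom.mapMatrix
    (nonsing_inv_mul _ (isUnit_det_smul_lapMatrix_add_one (G := G) hc))
  rwa [map_mul, map_one] at h

lemma ite_pathGraph_adj {M : Type*} [AddCommMonoid M] {n : ℕ}
    [DecidableRel (SimpleGraph.pathGraph n).Adj] (i j : Fin n) (x : M) :
    (if (SimpleGraph.pathGraph n).Adj i j then x else 0) =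
      (if (j : ℕ) = i + 1 then x else 0) + if (i : ℕ) = j + 1 then x else 0 := by
  simp only [SimpleGraph.pathGraph_adj]
  split_ifs <;> first | omega | simp

lemma sum_pathGraph_adj {M : Type*} [AddCommMonoid M] (N : ℕ)
    [DecidableRel (SimpleGraph.pathGraph (N + 1)).Adj] (f : Fin (N + 1) → Fin (N + 1) → M) :
    (∑ i, ∑ j, if (SimpleGraph.pathGraph (N + 1)).Adj i j then f i j else 0) =
      ∑ l : Fin N, (f l.castSucc l.succ + f l.succ l.castSucc) := by
  have h_succ (g : Fin (N + 1) → Fin (N + 1) → M) :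
      (∑ i : Fin (N + 1), ∑ j : Fin (N + 1), if (j : ℕ) = i + 1 then g i j else 0) =
        ∑ l : Fin N, g l.castSucc l.succ := by
    rw [Fin.sum_univ_castSucc]
    simp [Fin.sum_univ_succ, Fin.val_inj, (Fin.is_lt _).ne]
  simp only [ite_pathGraph_adj, Finset.sum_add_distrib]
  rw [h_succ, Finset.sum_comm, h_succ fun i j => f j i]

end GraphLaplacian

section Band

open scoped ComplexOrder

lemma neumannMinusLap_eq_lapMatrix {N : ℕ} (hN : 1 ≤ N)
    [DecidableRel (SimpleGraph.pathGraph (N + 1)).Adj] :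
    neumannMinusLap (N + 1) = (SimpleGraph.pathGraph (N + 1)).lapMatrix ℝ := by
  have h_degree (i : Fin (N + 1)) : ((SimpleGraph.pathGraph (N + 1)).degree i : ℝ) =
      if (i : ℕ) = 0 ∨ (i : ℕ) = N then 1 else 2 := by
    rw [SimpleGraph.degree_eq_sum_if_adj]
    simp only [ite_pathGraph_adj, Finset.sum_add_distrib]
    rw [Fin.sum_univ_eq_sum_range (fun j => if j = (i : ℕ) + 1 then (1 : ℝ) else 0),
      Fin.sum_univ_eq_sum_range (fun j => if (i : ℕ) = j + 1 then (1 : ℝ) else 0)]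
    obtain h_zero | ⟨k, hk⟩ : (i : ℕ) = 0 ∨ ∃ k, (i : ℕ) = k + 1 := by
      cases (i : ℕ) <;> simp
    · simp [h_zero, Nat.pos_iff_ne_zero.1 hN]
    · have h_last : k + 1 = N ↔ ¬ k + 1 < N := by omega
      by_cases h : k + 1 < N <;> simp [hk, h_last, h, (by omega : k < N + 1), one_add_one_eq_two]
  ext i j
  obtain rfl | h := eq_or_ne i j
  · simp [neumannMinusLap, SimpleGraph.lapMatrix, SimpleGraph.degMatrix, h_degree]
  · simp [neumannMinusLap, SimpleGraph.lapMatrix, SimpleGraph.degMatrix, h,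
      SimpleGraph.adjMatrix_apply, SimpleGraph.pathGraph_adj, neg_ite]

lemma Jmat_eq_smul_lapMatrix_add_one_inv {N : ℕ} (hN : 1 ≤ N) (W : ℕ)
    [DecidableRel (SimpleGraph.pathGraph (N + 1)).Adj] :
    Jmat (N + 1) W = ((W : ℝ) ^ 2 • (SimpleGraph.pathGraph (N + 1)).lapMatrix ℝ + 1)⁻¹ := by
  rw [Jmat, neumannMinusLap_eq_lapMatrix hN]

lemma Jmat_pos {N W : ℕ} (hN : 1 ≤ N) (hW : 1 ≤ W) (j k : Fin (N + 1)) :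
    0 < Jmat (N + 1) W j k := by
  classical
  rw [Jmat_eq_smul_lapMatrix_add_one_inv hN]
  exact smul_lapMatrix_add_one_inv_pos (SimpleGraph.pathGraph_preconnected _)
    (by positivity) j k

lemma Jmat_map_ofReal {N : ℕ} (hN : 1 ≤ N) (W : ℕ)
    [DecidableRel (SimpleGraph.pathGraph (N + 1)).Adj] :
    (Jmat (N + 1) W).map Complex.ofReal =
      ((W : ℂ) ^ 2 • (SimpleGraph.pathGraph (N + 1)).lapMatrix ℂ + 1)⁻¹ := by
  rw [Jmat_eq_smul_lapMatrix_add_one_inv hN, map_smul_lapMatrix_add_one_inv (by positivity)]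
  push_cast
  rfl

lemma posDef_Jmat_map_ofReal {N : ℕ} (hN : 1 ≤ N) (W : ℕ) :
    ((Jmat (N + 1) W).map Complex.ofReal).PosDef := by
  classical
  rw [Jmat_map_ofReal hN]
  exact_mod_cast (posDef_smul_lapMatrix_add_one (c := (W : ℝ) ^ 2) (by positivity)).inv

lemma det_Jmat_map_ofReal (N W : ℕ) :
    ((Jmat N W).map Complex.ofReal).det = (Jmat N W).det :=
  (Complex.ofRealHom.map_det _).symm

lemma ofReal_det_Jmat_ne_zero {N : ℕ} (hN : 1 ≤ N) (W : ℕ) :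
    ((Jmat (N + 1) W).det : ℂ) ≠ 0 :=
  det_Jmat_map_ofReal (N + 1) W ▸ (posDef_Jmat_map_ofReal hN W).det_pos.ne'

lemma star_dotProduct_Jmat_inv_mulVec {N : ℕ} (hN : 1 ≤ N) (W : ℕ) (x : Fin (N + 1) → ℂ) :
    star x ⬝ᵥ ((Jmat (N + 1) W).map Complex.ofReal)⁻¹ *ᵥ x =
      ((∑ j, ‖x j‖ ^ 2 + (W : ℝ) ^ 2 * ∑ l : Fin N, ‖x l.castSucc - x l.succ‖ ^ 2 : ℝ) : ℂ) := by
  classical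
  have h_unit : IsUnit ((W : ℂ) ^ 2 • (SimpleGraph.pathGraph (N + 1)).lapMatrix ℂ + 1).det := by
    exact_mod_cast
      (posDef_smul_lapMatrix_add_one (c := (W : ℝ) ^ 2) (by positivity)).det_pos.ne'.isUnit
  rw [Jmat_map_ofReal hN, nonsing_inv_nonsing_inv _ h_unit, add_mulVec, smul_mulVec, one_mulVec,
    dotProduct_add, dotProduct_smul, star_dotProduct_lapMatrix_mulVec,
    sum_pathGraph_adj N fun i j => ‖x i - x j‖ ^ 2]
  simp only [norm_sub_rev (x (Fin.succ _)), ← two_mul, ← Finset.mul_sum]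
  simp [dotProduct, Complex.conj_mul']
  ring

end Band

section Curry

lemma measurePreserving_curry (ι κ X : Type*) [Fintype ι] [Fintype κ] [MeasureSpace X]
    [SigmaFinite (volume : Measure X)] : MeasurePreserving (MeasurableEquiv.curry ι κ X) := by
  suffices h : Measure.map (MeasurableEquiv.curry ι κ X).symm volume = volume from
    (MeasurePreserving.mk (MeasurableEquiv.measurable _) h).symm
  refine (Measure.pi_eq fun s _ => ?_).symm
  have h_preimage : (MeasurableEquiv.curry ι κ X).symm ⁻¹' Set.univ.pi s =
      Set.univ.pi fun i => Set.univ.pi fun j => s (i, j) := by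
    ext f
    simp [MeasurableEquiv.curry]
  rw [MeasurableEquiv.map_apply, h_preimage, volume_pi_pi]
  simp only [volume_pi_pi, Fintype.prod_prod_type]

variable {ι κ κ' X E : Type*} [Fintype ι] [Fintype κ] [Fintype κ'] [MeasureSpace X]
  [SigmaFinite (volume : Measure X)] [NormedAddCommGroup E] [NormedSpace ℝ E]

lemma integral_curry (g : (ι → κ → X) → E) :
    ∫ x : ι × κ → X, g (Function.curry x) = ∫ y, g y :=
  (measurePreserving_curry ι κ X).integral_comp' g

lemma integral_curry_curry (g : (ι → κ → κ' → X) → E) :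
    ∫ x : ι × κ × κ' → X, g (fun i j k => x (i, j, k)) = ∫ y, g y := by
  refine (integral_curry (κ := κ × κ')
    fun y : ι → κ × κ' → X => g fun i j k => y i (j, k)).trans ?_
  exact (volume_preserving_pi fun _ => measurePreserving_curry κ κ' X).integral_comp
    (MeasurableEquiv.piCongrRight fun _ => MeasurableEquiv.curry κ κ' X).measurableEmbedding g

end Curry

section BandCorrelation

open scoped ComplexOrder Kronecker

lemma star_dotProduct_kronecker_one_mulVec {n p : Type*} [Fintype n] [Fintype p] [DecidableEq p]
    (A : Matrix n n ℂ) (v : n × p → ℂ) :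
    star v ⬝ᵥ (A ⊗ₖ (1 : Matrix p p ℂ)) *ᵥ v =
      ∑ q, (star fun j => v (j, q)) ⬝ᵥ A *ᵥ fun j => v (j, q) := by
  simp only [dotProduct, mulVec, Fintype.sum_prod_type, kroneckerMap_apply, one_apply]
  rw [Finset.sum_comm]
  simp

lemma trace_mul_conjTranspose_eq_sum_norm_sq {m n : Type*} [Fintype m] [Fintype n]
    (Q : Matrix m n ℂ) : (Q * Qᴴ).trace = ((∑ p : m × n, ‖Q p.1 p.2‖ ^ 2 : ℝ) : ℂ) := by
  simp [trace, mul_apply, Fintype.sum_prod_type, Complex.mul_conj']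

lemma ofReal_bandDensity (n W : ℕ) (H : Fin n × Fin n → ℂ) :
    (bandDensity n W (Function.curry H) : ℂ) =
      complexGaussianDensity
        (diagonal fun p : Fin n × Fin n => ((Jmat n W).map Complex.ofReal p.1 p.2)⁻¹) H := by
  have h_form : star H ⬝ᵥ
        diagonal (fun p : Fin n × Fin n => ((Jmat n W).map Complex.ofReal p.1 p.2)⁻¹) *ᵥ H =
      ((∑ p, ‖H p‖ ^ 2 / Jmat n W p.1 p.2 : ℝ) : ℂ) := by
    push_cast
    refine Finset.sum_congr rfl fun p _ => ?_
    rw [mulVec_diagonal, Pi.star_apply, Complex.star_def, map_apply, ← Complex.conj_mul']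
    ring
  rw [complexGaussianDensity, h_form, det_diagonal, bandDensity, ← Fintype.prod_prod_type']
  push_cast
  rw [← Finset.sum_neg_distrib, Complex.exp_sum, Finset.prod_mul_distrib, Finset.prod_inv_distrib,
    Finset.prod_mul_distrib, mul_inv, Finset.prod_const, Finset.card_univ, Finset.prod_inv_distrib]
  simp [neg_div]

/-- The action of the Gaussian field on `2 × 2` matrices dual to the band ensemble of width `W`. -/
def chainAction {N : ℕ} (W : ℕ) (Q : Fin (N + 1) → Fin 2 → Fin 2 → ℂ) : ℂ :=
  ∑ j, (Matrix.of (Q j) * (Matrix.of (Q j))ᴴ).trace + (W : ℂ) ^ 2 * ∑ l : Fin N,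
    ((Matrix.of (Q l.castSucc) - Matrix.of (Q l.succ)) *
      (Matrix.of (Q l.castSucc) - Matrix.of (Q l.succ))ᴴ).trace

lemma complexGaussianDensity_Jmat_inv_kronecker_one {N : ℕ} (hN : 1 ≤ N) (W : ℕ)
    (Q : Fin (N + 1) × Fin 2 × Fin 2 → ℂ) :
    complexGaussianDensity (((Jmat (N + 1) W).map Complex.ofReal)⁻¹ ⊗ₖ
        (1 : Matrix (Fin 2 × Fin 2) (Fin 2 × Fin 2) ℂ)) Q =
      (Real.pi ^ (4 * (N + 1)) * (Jmat (N + 1) W).det ^ 4 : ℂ)⁻¹ *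
        Complex.exp (-chainAction W fun j a b => Q (j, a, b)) := by
  have h_form : star Q ⬝ᵥ (((Jmat (N + 1) W).map Complex.ofReal)⁻¹ ⊗ₖ
      (1 : Matrix (Fin 2 × Fin 2) (Fin 2 × Fin 2) ℂ)) *ᵥ Q =
        chainAction W fun j a b => Q (j, a, b) := by
    simp only [star_dotProduct_kronecker_one_mulVec, star_dotProduct_Jmat_inv_mulVec hN,
      chainAction, trace_mul_conjTranspose_eq_sum_norm_sq, ← Complex.ofReal_sum]
    rw [Finset.sum_add_distrib, ← Finset.mul_sum, Finset.sum_comm,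
      Finset.sum_comm (s := Finset.univ (α := Fin 2 × Fin 2)) (t := Finset.univ (α := Fin N))]
    push_cast
    rfl
  rw [complexGaussianDensity, h_form, det_kronecker, det_one, one_pow, mul_one, det_nonsing_inv,
    det_Jmat_map_ofReal, Ring.inverse_eq_inv', mul_inv, inv_pow]
  simp [mul_comm 4]

lemma replicaBlock_eq_Qcal (z₁ z₂ : ℂ) (Q : Matrix (Fin 2) (Fin 2) ℂ) :
    replicaBlock ![z₁, z₂] Q = Qcal z₁ z₂ Q := by
  have h_star : star ![z₁, z₂] = ![starRingEnd ℂ z₁, starRingEnd ℂ z₂] := by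
    ext a
    fin_cases a <;> rfl
  rw [replicaBlock, Qcal, h_star]

theorem ofReal_Theta {N W : ℕ} (hN : 1 ≤ N) (hW : 1 ≤ W) (z₁ z₂ : ℂ) :
    (Theta (N + 1) W z₁ z₂ : ℂ) =
      (Real.pi ^ (4 * (N + 1)) * (Jmat (N + 1) W).det ^ 4 : ℂ)⁻¹ *
        ∫ Q : Fin (N + 1) → Fin 2 → Fin 2 → ℂ,
          (∏ j, (Qcal z₁ z₂ (Matrix.of (Q j))).det) * Complex.exp (-chainAction W Q) := by
  have h_duality := integral_norm_det_sq_eq_integral_det_replicaBlock (posDef_Jmat_map_ofReal hN W)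
    (fun j k => by simpa using Jmat_pos hN hW j k) ![z₁, z₂]
  have h_prod (H : Fin (N + 1) × Fin (N + 1) → ℂ) :
      ∏ a, (‖(Matrix.of (fun j k => H (j, k)) - ![z₁, z₂] a • 1).det‖ ^ 2 : ℂ) =
        ((‖(Matrix.of (Function.curry H) - z₁ • 1).det‖ ^ 2 *
          ‖(Matrix.of (Function.curry H) - z₂ • 1).det‖ ^ 2 : ℝ) : ℂ) := by
    rw [Fin.prod_univ_two]
    push_cast
    rfl
  rw [Theta, ← integral_curry, ← integral_complex_ofReal, ← integral_const_mul,
    ← integral_curry_curry]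
  simp only [Complex.ofReal_mul _ (bandDensity _ _ _), ofReal_bandDensity, ← h_prod, h_duality,
    complexGaussianDensity_Jmat_inv_kronecker_one hN, replicaBlock_eq_Qcal]
  congr with Q
  ring

end BandCorrelation

section AEInvertible

variable {n : Type*} [DecidableEq n]

lemma replicaBlock_add_smul_one (z : n → ℂ) (Q : Matrix n n ℂ) (t : ℝ) :
    replicaBlock z (Q + t • 1) =
      replicaBlock z Q + (t : ℂ) • fromBlocks 0 (Complex.I • 1) (Complex.I • 1) 0 := by
  simp [replicaBlock, fromBlocks_smul, fromBlocks_add, smul_comm Complex.I]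

variable [Fintype n]

lemma ae_det_add_smul_ne_zero (M : Matrix n n ℂ) {K : Matrix n n ℂ} (hK : K.det ≠ 0) :
    ∀ᵐ t : ℝ, (M + (t : ℂ) • K).det ≠ 0 := by
  have h_det (t : ℂ) : (M + t • K).det = K.det * (-(K⁻¹ * M)).charpoly.eval t := by
    rw [eval_charpoly, ← det_mul, sub_neg_eq_add, Matrix.mul_add, scalar_apply,
      ← smul_one_eq_diagonal, mul_smul_one, mul_nonsing_inv_cancel_left _ _ hK.isUnit, add_comm]
  have h_finite : {t : ℝ | (-(K⁻¹ * M)).charpoly.eval (t : ℂ) = 0}.Finite :=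
    (Polynomial.finite_setOfPred_isRoot (charpoly_monic _).ne_zero).preimage
      Complex.ofReal_injective.injOn
  filter_upwards [h_finite.countable.ae_notMem volume] with t ht
  rw [h_det]
  exact mul_ne_zero hK ht

lemma hasTemperateGrowth_finset_prod {V ι : Type*} [NormedAddCommGroup V] [NormedSpace ℝ V]
    (s : Finset ι) {f : ι → V → ℂ} (hf : ∀ i, (f i).HasTemperateGrowth) :
    (fun v => ∏ i ∈ s, f i v).HasTemperateGrowth := by
  classical
  induction s using Finset.induction_on with
  | empty => simp
  | insert i s hi ih =>
    simp only [Finset.prod_insert hi]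
    exact (hf i).mul ih

lemma hasTemperateGrowth_det {V : Type*} [NormedAddCommGroup V] [NormedSpace ℝ V]
    {M : V → Matrix n n ℂ} (hM : ∀ i j, (fun v => M v i j).HasTemperateGrowth) :
    (fun v => (M v).det).HasTemperateGrowth := by
  simp only [det_apply']
  exact .sum fun σ _ => (Function.HasTemperateGrowth.const _).mul
    (hasTemperateGrowth_finset_prod _ fun i => hM _ _)

variable (z : n → ℂ)

lemma hasTemperateGrowth_det_replicaBlock :
    (fun Q : n → n → ℂ => (replicaBlock z (Matrix.of Q)).det).HasTemperateGrowth := by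
  refine hasTemperateGrowth_det fun s t => ?_
  rcases s with a | a <;> rcases t with b | b
  · exact .const _
  · exact (Complex.I • (ContinuousLinearMap.proj b ∘L ContinuousLinearMap.proj a :
      (n → n → ℂ) →L[ℝ] ℂ)).hasTemperateGrowth
  · exact (Complex.I • (Complex.conjCLE.toContinuousLinearMap ∘L ContinuousLinearMap.proj a ∘L
      ContinuousLinearMap.proj b : (n → n → ℂ) →L[ℝ] ℂ)).hasTemperateGrowth
  · exact .const _

-- Instance search does not find this through the nested function type.
instance isAddHaarMeasure_volume_pi_pi (ι κ : Type*) [Fintype ι] [Fintype κ] :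
    (volume : Measure (ι → κ → ℂ)).IsAddHaarMeasure :=
  Measure.pi.isAddHaarMeasure fun _ : ι => (volume : Measure (κ → ℂ))

-- On every real line in the direction `1` the determinant is a nonzero polynomial of the parameter.
lemma ae_det_replicaBlock_ne_zero :
    ∀ᵐ Q : n → n → ℂ, (replicaBlock z (Matrix.of Q)).det ≠ 0 := by
  have h_det_offDiag :
      (fromBlocks 0 (Complex.I • 1) (Complex.I • 1) 0 : Matrix (n ⊕ n) (n ⊕ n) ℂ).det ≠ 0 := by
    refine det_ne_zero_of_left_inverse
      (B := -fromBlocks 0 (Complex.I • 1) (Complex.I • 1) 0) ?_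
    simp [fromBlocks_multiply, smul_smul, fromBlocks_neg]
  have h_continuous := (hasTemperateGrowth_det_replicaBlock z).1.continuous
  refine ae_mem_of_ae_add_linearMap_mem
    (LinearMap.toSpanSingleton ℝ (n → n → ℂ) (1 : Matrix n n ℂ)) volume
    (volume : Measure (n → n → ℂ))
    (isOpen_ne.preimage h_continuous).measurableSet fun Q => ?_
  filter_upwards [ae_det_add_smul_ne_zero (replicaBlock z (Matrix.of Q)) h_det_offDiag] with t ht
  rw [← replicaBlock_add_smul_one] at ht
  exact ht

end AEInvertible

section KernelChain

variable {X 𝕜 : Type*} [RCLike 𝕜]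

/-- The weight `k(x₀, x₁) ⋯ k(xₘ₋₁, xₘ) g(xₘ)` of a path `x` with `m` steps. -/
def pathWeight (k : X → X → 𝕜) (g : X → 𝕜) {m : ℕ} (x : Fin (m + 1) → X) : 𝕜 :=
  (∏ j : Fin m, k (x j.castSucc) (x j.succ)) * g (x (Fin.last m))

variable {k : X → X → 𝕜} {g : X → 𝕜} {c : ℝ} {m : ℕ}

lemma pathWeight_cons (x : X) (y : Fin (m + 1) → X) :
    pathWeight k g (Fin.cons x y : Fin (m + 2) → X) = k x (y 0) * pathWeight k g y := by
  rw [pathWeight, Fin.prod_univ_succ, mul_assoc]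
  rfl

lemma norm_pathWeight_le (hc : 0 ≤ c) (hk : ∀ x y, ‖k x y‖ ≤ c * ‖g x‖ * ‖g y‖)
    (x : Fin (m + 1) → X) :
    ‖pathWeight k g x‖ ≤ c ^ m * ‖g (x 0)‖ * ∏ j : Fin m, ‖g (x j.succ)‖ ^ 2 := by
  induction m with
  | zero => simp [pathWeight]
  | succ m ih =>
    rw [← Fin.cons_self_tail x, pathWeight_cons, norm_mul, Fin.prod_univ_succ]
    calc _ ≤ c * ‖g (x 0)‖ * ‖g (Fin.tail x 0)‖ *
          (c ^ m * ‖g (Fin.tail x 0)‖ * ∏ j : Fin m, ‖g (Fin.tail x j.succ)‖ ^ 2) :=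
        mul_le_mul (hk _ _) (ih _) (norm_nonneg _) (by positivity)
      _ = _ := by
        simp only [Fin.cons_zero, Fin.cons_succ]
        ring

variable [MeasurableSpace X] {μ : Measure X}

lemma measurable_pathWeight (hkm : Measurable (Function.uncurry k)) (hgm : Measurable g) :
    Measurable (pathWeight k g : (Fin (m + 1) → X) → 𝕜) := by
  refine Measurable.mul (Finset.measurable_prod _ fun j _ => ?_) (hgm.comp (measurable_pi_apply _))
  have h_step : Measurable fun x : Fin (m + 1) → X => (x j.castSucc, x j.succ) := by fun_prop
  exact hkm.comp h_step

lemma piFinSuccAbove_zero_symm_apply (p : X × (Fin m → X)) :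
    (MeasurableEquiv.piFinSuccAbove (fun _ : Fin (m + 1) => X) 0).symm p = Fin.cons p.1 p.2 :=
  Fin.insertNth_zero' _ _

variable [SigmaFinite μ]

lemma integral_pi_cons {E : Type*} [NormedAddCommGroup E] [NormedSpace ℝ E]
    {F : (Fin (m + 1) → X) → E} (hF : Integrable F (Measure.pi fun _ => μ)) :
    ∫ x, F x ∂Measure.pi (fun _ => μ) =
      ∫ x, ∫ y : Fin m → X, F (Fin.cons x y) ∂Measure.pi (fun _ => μ) ∂μ := by
  have h_preserving := (measurePreserving_piFinSuccAbove (fun _ : Fin (m + 1) => μ) 0).symm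
  rw [← h_preserving.integral_comp',
    integral_prod (fun p => F _) (h_preserving.integrable_comp_of_integrable hF)]
  simp only [piFinSuccAbove_zero_symm_apply]

lemma integrable_pathWeight_cons (hc : 0 ≤ c) (hk : ∀ x y, ‖k x y‖ ≤ c * ‖g x‖ * ‖g y‖)
    (hkm : Measurable (Function.uncurry k)) (hgm : Measurable g)
    (hg : Integrable (fun x => ‖g x‖ ^ 2) μ) (x : X) :
    Integrable (fun y : Fin m → X => pathWeight k g (Fin.cons x y : Fin (m + 1) → X))
      (Measure.pi fun _ => μ) := by
  have h_cons : Measurable fun y : Fin m → X => (Fin.cons x y : Fin (m + 1) → X) := by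
    simp only [← piFinSuccAbove_zero_symm_apply (x, _)]
    exact (MeasurableEquiv.measurable _).comp measurable_prodMk_left
  refine ((Integrable.fintype_prod fun _ => hg).const_mul (c ^ m * ‖g x‖)).mono'
    ((measurable_pathWeight hkm hgm).comp h_cons).aestronglyMeasurable
    (Eventually.of_forall fun y => norm_pathWeight_le hc hk (Fin.cons x y))

lemma integrable_mul_pathWeight (hc : 0 ≤ c) (hk : ∀ x y, ‖k x y‖ ≤ c * ‖g x‖ * ‖g y‖)
    (hkm : Measurable (Function.uncurry k)) (hgm : Measurable g)
    (hg : Integrable (fun x => ‖g x‖ ^ 2) μ) :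
    Integrable (fun x : Fin (m + 1) → X => g (x 0) * pathWeight k g x)
      (Measure.pi fun _ => μ) := by
  refine ((Integrable.fintype_prod fun _ => hg).const_mul (c ^ m)).mono'
    ((hgm.comp (measurable_pi_apply 0)).mul (measurable_pathWeight hkm hgm)).aestronglyMeasurable
    (Eventually.of_forall fun x => ?_)
  calc ‖g (x 0) * pathWeight k g x‖
      ≤ ‖g (x 0)‖ * (c ^ m * ‖g (x 0)‖ * ∏ j : Fin m, ‖g (x j.succ)‖ ^ 2) := by
        rw [norm_mul]
        gcongr
        exact norm_pathWeight_le hc hk x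
    _ = c ^ m * ∏ j, ‖g (x j)‖ ^ 2 := by
        rw [Fin.prod_univ_succ]
        ring

/-- The operator with kernel `k` with respect to `μ`. It acts on all functions, with the junk value
`0` wherever the defining integral diverges. -/
def kernelOperator (k : X → X → 𝕜) (μ : Measure X) (h : X → 𝕜) : X → 𝕜 :=
  fun x => ∫ y, k x y * h y ∂μ

lemma iterate_kernelOperator_eq_integral_pathWeight (hc : 0 ≤ c)
    (hk : ∀ x y, ‖k x y‖ ≤ c * ‖g x‖ * ‖g y‖) (hkm : Measurable (Function.uncurry k))
    (hgm : Measurable g) (hg : Integrable (fun x => ‖g x‖ ^ 2) μ) (x : X) :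
    (kernelOperator k μ)^[m] g x =
      ∫ y : Fin m → X, pathWeight k g (Fin.cons x y : Fin (m + 1) → X)
        ∂Measure.pi fun _ => μ := by
  induction m generalizing x with
  | zero => simp [pathWeight, Measure.real]
  | succ m ih =>
    rw [Function.iterate_succ_apply',
      integral_pi_cons (integrable_pathWeight_cons hc hk hkm hgm hg x), kernelOperator]
    simp only [ih, pathWeight_cons, Fin.cons_zero, integral_const_mul]

theorem integral_iterate_kernelOperator_mul (hc : 0 ≤ c)
    (hk : ∀ x y, ‖k x y‖ ≤ c * ‖g x‖ * ‖g y‖) (hkm : Measurable (Function.uncurry k))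
    (hgm : Measurable g) (hg : Integrable (fun x => ‖g x‖ ^ 2) μ) :
    ∫ x, (kernelOperator k μ)^[m] g x * g x ∂μ =
      ∫ x : Fin (m + 1) → X, g (x 0) * pathWeight k g x ∂Measure.pi fun _ => μ := by
  rw [integral_pi_cons (integrable_mul_pathWeight hc hk hkm hgm hg)]
  simp only [iterate_kernelOperator_eq_integral_pathWeight hc hk hkm hgm hg, Fin.cons_zero,
    mul_comm (g _), integral_mul_const]

end KernelChain

section TransferKernel

variable (W : ℕ) (z z₁ z₂ : ℂ)

/-- The function `g = e^f` of the paper, on matrices written as functions of their indices. -/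
def transferWeight (Q : Fin 2 → Fin 2 → ℂ) : ℂ := Complex.exp (fQ z z₁ z₂ (Matrix.of Q))

/-- The scalar prefactor `π⁴W⁴λ_*⁻²` of `Kker`. -/
def transferPrefactor : ℝ := Real.pi ^ 4 * (W : ℝ) ^ 4 * ((lamstar W z) ^ 2)⁻¹

lemma hasTemperateGrowth_det_Qcal :
    (fun Q : Fin 2 → Fin 2 → ℂ => (Qcal z₁ z₂ (Matrix.of Q)).det).HasTemperateGrowth := by
  simpa only [replicaBlock_eq_Qcal] using hasTemperateGrowth_det_replicaBlock ![z₁, z₂]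

lemma ae_det_Qcal_ne_zero :
    ∀ᵐ Q : Fin 2 → Fin 2 → ℂ, (Qcal z₁ z₂ (Matrix.of Q)).det ≠ 0 := by
  simpa only [replicaBlock_eq_Qcal] using ae_det_replicaBlock_ne_zero ![z₁, z₂]

lemma transferWeight_sq {Q : Fin 2 → Fin 2 → ℂ} (hQ : (Qcal z₁ z₂ (Matrix.of Q)).det ≠ 0) :
    transferWeight z z₁ z₂ Q ^ 2 =
      Complex.exp (2 * ustar z ^ 2) * ((Qcal z₁ z₂ (Matrix.of Q)).det *
        Complex.exp (-(Matrix.of Q * (Matrix.of Q)ᴴ).trace)) := by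
  rw [transferWeight, ← Complex.exp_nat_mul, fQ, Nat.cast_ofNat, ← mul_assoc,
    mul_one_div_cancel two_ne_zero, one_mul, Complex.exp_add, Complex.exp_add,
    Complex.exp_log hQ]
  ring

lemma measurable_transferWeight : Measurable (transferWeight z z₁ z₂) := by
  have h_det := (hasTemperateGrowth_det_Qcal z₁ z₂).1.continuous.measurable
  have h_trace : Measurable fun Q : Fin 2 → Fin 2 → ℂ =>
      (Matrix.of Q * (Matrix.of Q)ᴴ).trace := by
    simp only [trace_mul_conjTranspose_eq_sum_norm_sq, Matrix.of_apply]
    fun_prop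
  unfold transferWeight fQ
  fun_prop

lemma norm_sq_le_re_trace_mul_conjTranspose (Q : Fin 2 → Fin 2 → ℂ) :
    ‖Q‖ ^ 2 ≤ (Matrix.of Q * (Matrix.of Q)ᴴ).trace.re := by
  rw [trace_mul_conjTranspose_eq_sum_norm_sq, Complex.ofReal_re, Fintype.sum_prod_type]
  exact (pi_norm_sq_le_sum Q).trans (Finset.sum_le_sum fun a _ => pi_norm_sq_le_sum (Q a))

lemma integrable_norm_transferWeight_sq :
    Integrable fun Q => ‖transferWeight z z₁ z₂ Q‖ ^ 2 := by
  have h_integrable : Integrable fun Q : Fin 2 → Fin 2 → ℂ =>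
      (Qcal z₁ z₂ (Matrix.of Q)).det * Complex.exp (-(Matrix.of Q * (Matrix.of Q)ᴴ).trace) := by
    refine integrable_temperate_mul_cexp_neg volume (hasTemperateGrowth_det_Qcal z₁ z₂) ?_ one_pos
      fun Q => (one_mul _).trans_le (norm_sq_le_re_trace_mul_conjTranspose Q)
    simp only [trace_mul_conjTranspose_eq_sum_norm_sq, Matrix.of_apply]
    fun_prop
  refine (h_integrable.const_mul (Complex.exp (2 * ustar z ^ 2))).norm.congr ?_
  filter_upwards [ae_det_Qcal_ne_zero z₁ z₂] with Q hQ
  rw [← transferWeight_sq z z₁ z₂ hQ, norm_pow]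

lemma Kker_eq (Q Q' : Fin 2 → Fin 2 → ℂ) :
    Kker W z z₁ z₂ (Matrix.of Q) (Matrix.of Q') =
      transferPrefactor W z * Complex.exp (-((W : ℂ) ^ 2 *
        ((Matrix.of Q - Matrix.of Q') * (Matrix.of Q - Matrix.of Q')ᴴ).trace)) *
        transferWeight z z₁ z₂ Q * transferWeight z z₁ z₂ Q' := by
  rw [Kker, Complex.exp_add, Complex.exp_add, transferPrefactor, transferWeight, transferWeight,
    neg_mul]
  ring

lemma transferPrefactor_nonneg : 0 ≤ transferPrefactor W z := by
  unfold transferPrefactor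
  positivity

lemma norm_Kker_le (Q Q' : Fin 2 → Fin 2 → ℂ) :
    ‖Kker W z z₁ z₂ (Matrix.of Q) (Matrix.of Q')‖ ≤
      transferPrefactor W z * ‖transferWeight z z₁ z₂ Q‖ * ‖transferWeight z z₁ z₂ Q'‖ := by
  have h_exp : ‖Complex.exp (-((W : ℂ) ^ 2 *
      ((Matrix.of Q - Matrix.of Q') * (Matrix.of Q - Matrix.of Q')ᴴ).trace))‖ ≤ 1 := by
    rw [trace_mul_conjTranspose_eq_sum_norm_sq, ← Complex.ofReal_natCast, ← Complex.ofReal_pow,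
      ← Complex.ofReal_mul, ← Complex.ofReal_neg, Complex.norm_exp_ofReal, Real.exp_le_one_iff,
      neg_nonpos]
    positivity
  rw [Kker_eq, norm_mul, norm_mul, norm_mul, Complex.norm_real,
    Real.norm_of_nonneg (transferPrefactor_nonneg W z)]
  gcongr
  exact mul_le_of_le_one_right (transferPrefactor_nonneg W z) h_exp

lemma measurable_Kker : Measurable (Function.uncurry fun Q Q' : Fin 2 → Fin 2 → ℂ =>
    Kker W z z₁ z₂ (Matrix.of Q) (Matrix.of Q')) := by
  have h_weight := measurable_transferWeight z z₁ z₂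
  simp only [Function.uncurry_def, Kker_eq, trace_mul_conjTranspose_eq_sum_norm_sq,
    Matrix.sub_apply, Matrix.of_apply]
  fun_prop

lemma integral_iterate_Kop_mul_transferWeight (N : ℕ) :
    ∫ Q, (Kop W z z₁ z₂)^[N] (transferWeight z z₁ z₂) Q * transferWeight z z₁ z₂ Q =
      ∫ Q : Fin (N + 1) → Fin 2 → Fin 2 → ℂ, transferWeight z z₁ z₂ (Q 0) *
        (∏ j : Fin N, Kker W z z₁ z₂ (Matrix.of (Q j.castSucc)) (Matrix.of (Q j.succ))) *
        transferWeight z z₁ z₂ (Q (Fin.last N)) := by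
  simp only [mul_assoc]
  exact integral_iterate_kernelOperator_mul (transferPrefactor_nonneg W z)
    (norm_Kker_le W z z₁ z₂) (measurable_Kker W z z₁ z₂) (measurable_transferWeight z z₁ z₂)
    (integrable_norm_transferWeight_sq z z₁ z₂)

lemma mul_prod_Kker_mul_eq {N : ℕ} {Q : Fin (N + 1) → Fin 2 → Fin 2 → ℂ}
    (hQ : ∀ j, (Qcal z₁ z₂ (Matrix.of (Q j))).det ≠ 0) :
    transferWeight z z₁ z₂ (Q 0) *
        (∏ j : Fin N, Kker W z z₁ z₂ (Matrix.of (Q j.castSucc)) (Matrix.of (Q j.succ))) *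
        transferWeight z z₁ z₂ (Q (Fin.last N)) =
      transferPrefactor W z ^ N * Complex.exp (2 * ustar z ^ 2) ^ (N + 1) *
        ((∏ j, (Qcal z₁ z₂ (Matrix.of (Q j))).det) * Complex.exp (-chainAction W Q)) := by
  set g := fun j => transferWeight z z₁ z₂ (Q j)
  set kinetic := fun l : Fin N => Complex.exp (-((W : ℂ) ^ 2 *
    ((Matrix.of (Q l.castSucc) - Matrix.of (Q l.succ)) *
      (Matrix.of (Q l.castSucc) - Matrix.of (Q l.succ))ᴴ).trace))
  calc _ = transferPrefactor W z ^ N * (∏ l, kinetic l) *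
        (((∏ l : Fin N, g l.castSucc) * g (Fin.last N)) * (g 0 * ∏ l : Fin N, g l.succ)) := by
        simp only [Kker_eq, Finset.prod_mul_distrib, Finset.prod_const, Finset.card_univ,
          Fintype.card_fin, g, kinetic]
        ring
    _ = transferPrefactor W z ^ N * (∏ l, kinetic l) * ∏ j, g j ^ 2 := by
        rw [← Fin.prod_univ_castSucc, ← Fin.prod_univ_succ, ← sq, Finset.prod_pow]
    _ = _ := by
        simp only [g, kinetic, transferWeight_sq z z₁ z₂ (hQ _), Finset.prod_mul_distrib,
          Finset.prod_const, Finset.card_univ, Fintype.card_fin, ← Complex.exp_sum,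
          Finset.sum_neg_distrib, ← Finset.mul_sum]
        rw [chainAction, neg_add, Complex.exp_add]
        ring

lemma ThetaTilde_normalization {N : ℕ} :
    (Real.pi ^ 2 * (W : ℝ) ^ 2 * (lamstar W z)⁻¹) ^ (2 * N) * (CNW (N + 1) W z)⁻¹ =
      transferPrefactor W z ^ N * Real.exp (2 * ustar z ^ 2) ^ (N + 1) *
        (Real.pi ^ (4 * (N + 1)) * (Jmat (N + 1) W).det ^ 4) := by
  have h_exp : Real.exp (-2 * ((N + 1 : ℕ) : ℝ) * ustar z ^ 2) =
      (Real.exp (2 * ustar z ^ 2) ^ (N + 1))⁻¹ := by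
    rw [← Real.exp_nat_mul, ← Real.exp_neg]
    ring_nf
  rw [CNW, h_exp, pow_mul, transferPrefactor, mul_inv, mul_inv, inv_inv, inv_inv, inv_inv]
  ring

end TransferKernel

theorem transfer_operator_representation_general {N W : ℕ} (hN : 1 ≤ N) (hW : 1 ≤ W)
    (z z₁ z₂ : ℂ) :
    (ThetaTilde (N + 1) W z z₁ z₂ : ℂ) =
      (∫ Q : Fin (N + 1) → Fin 2 → Fin 2 → ℂ,
        Complex.exp (fQ z z₁ z₂ (Matrix.of (Q 0))) *
        (∏ j : Fin N, Kker W z z₁ z₂ (Matrix.of (Q j.castSucc)) (Matrix.of (Q j.succ))) *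
        Complex.exp (fQ z z₁ z₂ (Matrix.of (Q (Fin.last N))))) ∧
    (ThetaTilde (N + 1) W z z₁ z₂ : ℂ) =
      ∫ Q : Fin 2 → Fin 2 → ℂ,
        ((Kop W z z₁ z₂)^[N] (fun Q' => Complex.exp (fQ z z₁ z₂ (Matrix.of Q')))) Q *
        Complex.exp (fQ z z₁ z₂ (Matrix.of Q)) := by
  suffices h_chain : (ThetaTilde (N + 1) W z z₁ z₂ : ℂ) = _ from
    ⟨h_chain, h_chain.trans (integral_iterate_Kop_mul_transferWeight W z z₁ z₂ N).symm⟩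
  have h_det_ne : ∀ᵐ Q : Fin (N + 1) → Fin 2 → Fin 2 → ℂ,
      ∀ j, (Qcal z₁ z₂ (Matrix.of (Q j))).det ≠ 0 :=
    ae_all_iff.2 fun j => (Measure.tendsto_eval_ae_ae
      (μ := fun _ : Fin (N + 1) => (volume : Measure (Fin 2 → Fin 2 → ℂ))) (i := j)).eventually
      (ae_det_Qcal_ne_zero z₁ z₂)
  have h_J := ofReal_det_Jmat_ne_zero hN W
  calc _ = transferPrefactor W z ^ N * Complex.exp (2 * ustar z ^ 2) ^ (N + 1) *
      ∫ Q : Fin (N + 1) → Fin 2 → Fin 2 → ℂ,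
        (∏ j, (Qcal z₁ z₂ (Matrix.of (Q j))).det) * Complex.exp (-chainAction W Q) := by
        rw [ThetaTilde, Nat.add_sub_cancel, ThetaTilde_normalization, Complex.ofReal_mul,
          ofReal_Theta hN hW]
        push_cast
        field_simp
    _ = _ := by
        rw [← integral_const_mul]
        exact integral_congr_ae (h_det_ne.mono fun Q hQ => (mul_prod_Kker_mul_eq W z z₁ z₂ hQ).symm)

/-- Proposition 2.1 of the paper: the transfer-operator
representation of the normalized second correlation function of characteristic
polynomials: for `N + 1` sites,
`Θ̃(z₁,z₂) = ∫ e^{f(Q₁)} ∏_{j=1}^{N} 𝒦_ζ(Q_j,Q_{j+1}) e^{f(Q_{N+1})} ∏ dQ_j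
          = (𝒦_ζ^N g, g)` with `g = e^f`. -/
theorem transfer_operator_representation
    (N W : ℕ) (z ζ : ℂ) (hz : ‖z‖ < 1) (hN : 1 ≤ N) (hW : 1 ≤ W) :
    (ThetaTilde (N + 1) W z (z + ζ / (Real.sqrt (N + 1) : ℂ))
        (z - ζ / (Real.sqrt (N + 1) : ℂ)) : ℂ) =
      (∫ Q : Fin (N + 1) → Fin 2 → Fin 2 → ℂ,
        Complex.exp (fQ z (z + ζ / (Real.sqrt (N + 1) : ℂ))
            (z - ζ / (Real.sqrt (N + 1) : ℂ)) (Matrix.of (Q 0))) *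
        (∏ j : Fin N,
          Kker W z (z + ζ / (Real.sqrt (N + 1) : ℂ)) (z - ζ / (Real.sqrt (N + 1) : ℂ))
            (Matrix.of (Q j.castSucc)) (Matrix.of (Q j.succ))) *
        Complex.exp (fQ z (z + ζ / (Real.sqrt (N + 1) : ℂ))
            (z - ζ / (Real.sqrt (N + 1) : ℂ)) (Matrix.of (Q (Fin.last N))))) ∧
    (ThetaTilde (N + 1) W z (z + ζ / (Real.sqrt (N + 1) : ℂ))
        (z - ζ / (Real.sqrt (N + 1) : ℂ)) : ℂ) =
      ∫ Q : Fin 2 → Fin 2 → ℂ,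
        ((Kop W z (z + ζ / (Real.sqrt (N + 1) : ℂ)) (z - ζ / (Real.sqrt (N + 1) : ℂ)))^[N]
          (fun Q' => Complex.exp (fQ z (z + ζ / (Real.sqrt (N + 1) : ℂ))
            (z - ζ / (Real.sqrt (N + 1) : ℂ)) (Matrix.of Q')))) Q *
        Complex.exp (fQ z (z + ζ / (Real.sqrt (N + 1) : ℂ))
            (z - ζ / (Real.sqrt (N + 1) : ℂ)) (Matrix.of Q)) :=
  transfer_operator_representation_general hN hW z _ _

end
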